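/- arXiv:2411.12684 — 5 statements merged into one kernel-verified Lean document; each statement's English description precedes it below -/
import Mathlib

section
/- Let f : ℝ/ℤ → ℝ be a continuous piecewise-linear function with finitely many pieces, each piece having rational slope and rational endpoints, and let b be a rational number. Then there is a natural number M ≥ 1 such that for each integer 0 ≤ Q < M there is a nonnegative rational number γ_Q with the following property: for all sufficiently large natural numbers q with q ≡ Q (mod M), one has min_{t ∈ b/q + ⟨1/q⟩} f(t) = min_{t ∈ ℝ/ℤ} f(t) + γ_Q/q. -/
noncomputable section

/-- `f : ℝ/ℤ → ℝ` is piecewise linear with finitely many pieces, each with rational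
slope and rational endpoints: there is a finite rational partition `0 = t₀ < t₁ < ⋯ < tₘ = 1`
of the circle such that on each piece `[tᵢ, tᵢ₊₁]` the function is affine with rational slope. -/
def IsRatPiecewiseLinear (f : AddCircle (1 : ℝ) → ℝ) : Prop :=
  ∃ (m : ℕ) (t : Fin (m + 1) → ℚ) (lam : Fin m → ℚ),
    t 0 = 0 ∧ t (Fin.last m) = 1 ∧ StrictMono t ∧
    ∀ i : Fin m, ∀ s : ℝ, ((t i.castSucc : ℚ) : ℝ) ≤ s → s ≤ ((t i.succ : ℚ) : ℝ) →
      f ((s : ℝ) : AddCircle (1 : ℝ)) =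
        f ((((t i.castSucc : ℚ) : ℝ)) : AddCircle (1 : ℝ)) +
          ((lam i : ℚ) : ℝ) * (s - ((t i.castSucc : ℚ) : ℝ))

/-!
On a piece `[u, v]` where `f` has slope `l ≥ 0`, the minimum of `f` over the points `(b + r) / q` is
attained at the first such point after `u`, which is `u + fract (b - q u) / q`; it exceeds `f u` by
`l * fract (b - q u) / q`, and since `u` is rational this numerator depends only on `q` modulo the
denominator of `u`. For `l ≤ 0` the last such point before `v` plays the same role. Among finitely
many values `cᵢ + γᵢ / q` the smallest is, for large `q`, the one with `(cᵢ, γᵢ)`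
lexicographically least.
-/

open Set Filter Topology
open scoped Pointwise

theorem isLeast_iUnion_of_forall_le {ι α : Type*} [Preorder α] {A : ι → Set α} {a : ι → α}
    (hA : ∀ i, IsLeast (A i) (a i)) {i : ι} (hi : ∀ j, a i ≤ a j) :
    IsLeast (⋃ j, A j) (a i) := by
  refine ⟨mem_iUnion_of_mem i (hA i).1, fun x hx => ?_⟩
  obtain ⟨j, hj⟩ := mem_iUnion.1 hx
  exact (hi j).trans ((hA j).2 hj)

theorem tendsto_add_div_natCast (c g : ℝ) :
    Tendsto (fun q : ℕ => c + g / q) atTop (𝓝 c) := by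
  simpa only [add_zero] using (tendsto_const_div_atTop_nhds_zero_nat g).const_add c

theorem exists_eventually_forall_add_div_natCast_le {ι : Type*} [Finite ι] [Nonempty ι]
    (c g : ι → ℝ) :
    ∃ i, (∀ j, c i ≤ c j) ∧ ∀ᶠ q : ℕ in atTop, ∀ j, c i + g i / q ≤ c j + g j / q := by
  obtain ⟨i, hi⟩ := Finite.exists_min fun j => toLex (c j, g j)
  have hlex : ∀ j, c i < c j ∨ c i = c j ∧ g i ≤ g j := fun j => Prod.Lex.toLex_le_toLex.1 (hi j)
  refine ⟨i, fun j => (hlex j).elim le_of_lt fun h => h.1.le, eventually_all.2 fun j => ?_⟩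
  rcases hlex j with hlt | ⟨heq, hle⟩
  · exact ((tendsto_add_div_natCast _ _).eventually_lt (tendsto_add_div_natCast _ _) hlt).mono
      fun _ => le_of_lt
  · refine Eventually.of_forall fun q => ?_
    rw [heq]
    gcongr

/-- The sets `A q` have, for all large `q`, a least element of the form `c + γ / q`, where the
rational number `γ ≥ 0` depends only on the residue of `q` modulo `M`. This is the conclusion of
the theorem, isolated so that it can be proved piece by piece. -/
def HasResidueMin (M : ℕ) (A : ℕ → Set ℝ) (c : ℝ) : Prop :=
  ∀ Q : ℕ, ∃ γ : ℚ, 0 ≤ γ ∧ ∀ᶠ q : ℕ in atTop, q % M = Q → IsLeast (A q) (c + γ / q)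

theorem HasResidueMin.iUnion {ι : Type*} [Finite ι] {M : ℕ} {A : ι → ℕ → Set ℝ} {c : ι → ℝ}
    (hA : ∀ i, HasResidueMin M (A i) (c i)) {i : ι} (hi : ∀ j, c i ≤ c j) :
    HasResidueMin M (fun q => ⋃ j, A j q) (c i) := by
  intro Q
  choose γ hγ hleast using fun j => hA j Q
  have : Nonempty ι := ⟨i⟩
  obtain ⟨k, hk, hle⟩ := exists_eventually_forall_add_div_natCast_le c fun j => (γ j : ℝ)
  refine ⟨γ k, hγ k, ?_⟩
  filter_upwards [hle, eventually_all.2 hleast] with q hle hleast hq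
  rw [(hi k).antisymm (hk i)]
  exact isLeast_iUnion_of_forall_le (fun j => hleast j hq) hle

section Grid

variable {K : Type*} [Field K]

/-- The points `(b + r) / q` with `r` an integer: for a positive integer `q`, the preimage in `K`
of the coset `b / q + ⟨1 / q⟩` of `K / ℤ`. -/
def grid (b q : K) : Set K :=
  {x | ∃ r : ℤ, x = (b + r) / q}

theorem neg_grid (b q : K) : -grid b q = grid (-b) q := by
  ext x
  refine (Equiv.neg ℤ).exists_congr fun r => ?_
  rw [neg_eq_iff_eq_neg, Equiv.neg_apply, Int.cast_neg, ← neg_add, neg_div]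

theorem preimage_coe_image_coe_grid [CharZero K] (b : K) {q : ℕ} (hq : q ≠ 0) :
    ((↑) : K → AddCircle (1 : K)) ⁻¹' ((↑) '' grid b (q : K)) = grid b (q : K) := by
  refine (subset_preimage_image _ _).antisymm' ?_
  rintro x ⟨_, ⟨r, rfl⟩, hx⟩
  rw [eq_comm, ← sub_eq_zero, ← AddCircle.coe_sub, AddCircle.coe_eq_zero_iff] at hx
  obtain ⟨n, hn⟩ := hx
  refine ⟨r + q * n, ?_⟩
  rw [sub_eq_iff_eq_add'.1 hn.symm, zsmul_one]
  push_cast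
  field_simp
  ring

variable [LinearOrder K] [IsStrictOrderedRing K] [FloorRing K] (b : K) {q u v : K}

theorem isLeast_Icc_inter_grid (hq : 0 < q) (huv : u + 1 / q ≤ v) :
    IsLeast (Icc u v ∩ grid b q) (u + Int.fract (b - q * u) / q) := by
  have hfract : Int.fract (b - q * u) / q ≤ 1 / q := by
    gcongr
    exact (Int.fract_lt_one _).le
  refine ⟨⟨⟨?_, by linarith⟩, -⌊b - q * u⌋, ?_⟩, ?_⟩
  · exact le_add_of_nonneg_right (div_nonneg (Int.fract_nonneg _) hq.le)
  · rw [Int.fract]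
    push_cast
    field_simp
    ring
  · rintro _ ⟨⟨hux, -⟩, r, rfl⟩
    have hnonneg : 0 ≤ b - q * u + r := by linarith [(le_div_iff₀ hq).1 hux]
    have hle : Int.fract (b - q * u) ≤ b - q * u + r := by
      rw [← Int.fract_add_intCast _ r]
      exact sub_le_self _ (Int.cast_nonneg (Int.floor_nonneg.2 hnonneg))
    rw [le_div_iff₀ hq, add_mul, div_mul_cancel₀ _ hq.ne']
    linarith

end Grid

section Piece

theorem fract_sub_natCast_mul_eq_fract_sub_mod_mul {M : ℕ} {u : ℚ} (hu : u.den ∣ M) (x : ℚ)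
    (q : ℕ) : Int.fract (x - q * u) = Int.fract (x - (q % M : ℕ) * u) := by
  obtain ⟨k, rfl⟩ := hu
  set d := q / (u.den * k)
  have hq : (q : ℚ) = (q % (u.den * k) : ℕ) + u.den * k * d := by
    exact_mod_cast (Nat.mod_add_div q (u.den * k)).symm
  have hqu : q * u = (q % (u.den * k) : ℕ) * u + (k * d * u.num : ℤ) := by
    nth_rw 1 [hq]
    push_cast
    rw [← Rat.den_mul_eq_num u]
    ring
  rw [hqu, ← sub_sub, Int.fract_sub_intCast]

theorem eventually_add_one_div_natCast_le {u v : ℝ} (huv : u < v) :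
    ∀ᶠ q : ℕ in atTop, u + 1 / q ≤ v :=
  ((tendsto_add_div_natCast u 1).eventually_lt_const huv).mono fun _ => le_of_lt

theorem monotoneOn_of_forall_eq_add_mul_sub {R : Type*} [Ring R] [PartialOrder R]
    [IsOrderedRing R] {F : R → R} {S : Set R} {y l u : R} (hl : 0 ≤ l)
    (hF : ∀ s ∈ S, F s = y + l * (s - u)) : MonotoneOn F S := by
  intro s hs t ht hst
  rw [hF s hs, hF t ht]
  gcongr

variable {F : ℝ → ℝ} {M : ℕ} {u v l : ℚ}

theorem hasResidueMin_image_of_slope_nonneg (huv : u < v) (hl : 0 ≤ l) (hu : u.den ∣ M)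
    (hF : ∀ s ∈ Icc (u : ℝ) v, F s = F u + l * (s - u)) (b : ℚ) :
    HasResidueMin M (fun q => F '' (Icc ↑u ↑v ∩ grid ↑b ↑q)) (F u) := by
  intro Q
  refine ⟨l * Int.fract (b - Q * u), mul_nonneg hl (Int.fract_nonneg _), ?_⟩
  filter_upwards [eventually_gt_atTop 0, eventually_add_one_div_natCast_le (Rat.cast_lt.2 huv)]
    with q hq hlen hmod
  have hfirst := isLeast_Icc_inter_grid (b : ℝ) (Nat.cast_pos.2 hq) hlen
  have hfract : ((Int.fract (b - Q * u) : ℚ) : ℝ) = Int.fract ((b : ℝ) - q * u) := by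
    rw [← hmod, ← fract_sub_natCast_mul_eq_fract_sub_mod_mul hu, Rat.cast_fract]
    push_cast
    rfl
  have hvalue : F u + ((l * Int.fract (b - Q * u) : ℚ) : ℝ) / q
      = F (u + Int.fract ((b : ℝ) - q * u) / q) := by
    rw [hF _ hfirst.1.1, Rat.cast_mul, hfract, add_sub_cancel_left, mul_div_assoc]
  rw [hvalue]
  exact ((monotoneOn_of_forall_eq_add_mul_sub (Rat.cast_nonneg.2 hl) hF).mono
    inter_subset_left).map_isLeast hfirst

theorem exists_isLeast_and_hasResidueMin_of_slope_nonneg (huv : u < v) (hl : 0 ≤ l)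
    (hu : u.den ∣ M) (hF : ∀ s ∈ Icc (u : ℝ) v, F s = F u + l * (s - u)) (b : ℚ) :
    ∃ c, IsLeast (F '' Icc ↑u ↑v) c ∧
      HasResidueMin M (fun q => F '' (Icc ↑u ↑v ∩ grid ↑b ↑q)) c :=
  ⟨F u, (monotoneOn_of_forall_eq_add_mul_sub (Rat.cast_nonneg.2 hl) hF).map_isLeast
    (isLeast_Icc (Rat.cast_le.2 huv.le)), hasResidueMin_image_of_slope_nonneg huv hl hu hF b⟩

theorem exists_isLeast_and_hasResidueMin_of_affine (huv : u < v) (hu : u.den ∣ M) (hv : v.den ∣ M)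
    (hF : ∀ s ∈ Icc (u : ℝ) v, F s = F u + l * (s - u)) (b : ℚ) :
    ∃ c, IsLeast (F '' Icc ↑u ↑v) c ∧
      HasResidueMin M (fun q => F '' (Icc ↑u ↑v ∩ grid ↑b ↑q)) c := by
  rcases le_total 0 l with hl | hl
  · exact exists_isLeast_and_hasResidueMin_of_slope_nonneg huv hl hu hF b
  -- Reflecting `s ↦ -s` makes the slope nonnegative and moves the minimum to the left endpoint.
  have hreflect : ∀ s ∈ Icc ((-v : ℚ) : ℝ) (-u : ℚ),
      F (-s) = F (-(-v : ℚ)) + (-l : ℚ) * (s - (-v : ℚ)) := by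
    push_cast
    rintro s ⟨hvs, hsu⟩
    have huv' : (u : ℝ) ≤ v := Rat.cast_le.2 huv.le
    rw [neg_neg, hF (-s) ⟨le_neg.2 hsu, neg_le.2 hvs⟩, hF v ⟨huv', le_rfl⟩]
    ring
  have himage : ∀ S : Set ℝ, (fun s => F (-s)) '' S = F '' (-S) := fun S => by
    rw [← image_neg_eq_neg, image_image]
  simpa only [himage, inter_neg, neg_Icc, neg_grid, Rat.cast_neg, neg_neg] using
    exists_isLeast_and_hasResidueMin_of_slope_nonneg (neg_lt_neg huv) (neg_nonneg.2 hl)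
      (by rwa [Rat.den_neg_eq_den]) hreflect (-b)

end Piece

theorem Ico_subset_iUnion_Icc_castSucc_succ {α : Type*} [LinearOrder α] {m : ℕ}
    (t : Fin (m + 1) → α) :
    Ico (t 0) (t (Fin.last m)) ⊆ ⋃ i : Fin m, Icc (t i.castSucc) (t i.succ) := by
  rintro s ⟨h0, hlast⟩
  suffices ∀ j, s < t j → ∃ i : Fin m, s ∈ Icc (t i.castSucc) (t i.succ) from
    mem_iUnion.2 (this _ hlast)
  intro j
  induction j using Fin.induction with
  | zero => exact fun h => absurd h h0.not_gt
  | succ i ih =>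
    intro h
    rcases lt_or_ge s (t i.castSucc) with hlt | hge
    · exact ih hlt
    · exact ⟨i, hge, h.le⟩

theorem iUnion_coe_image_Icc_castSucc_succ {K : Type*} [AddCommGroup K] [LinearOrder K]
    [IsOrderedAddMonoid K] [Archimedean K] {p : K} [Fact (0 < p)] {m : ℕ} {t : Fin (m + 1) → K}
    (ht : t (Fin.last m) = t 0 + p) :
    ⋃ i : Fin m, ((↑) : K → AddCircle p) '' Icc (t i.castSucc) (t i.succ) = univ := by
  rw [← image_iUnion, ← univ_subset_iff, ← AddCircle.coe_image_Ico_eq p (t 0), ← ht]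
  exact image_mono (Ico_subset_iUnion_Icc_castSucc_succ t)

theorem image_image_eq_iUnion_image_inter {α β γ ι : Type*} {π : α → β} {I : ι → Set α}
    (hI : ⋃ i, π '' I i = univ) {G : Set α} (hG : π ⁻¹' (π '' G) = G) (f : β → γ) :
    f '' (π '' G) = ⋃ i, f ∘ π '' (I i ∩ G) := by
  rw [← hG]
  simp only [image_comp, image_inter_preimage, ← image_iUnion, ← iUnion_inter]
  rw [image_iUnion, hI, univ_inter, hG]

theorem IsRatPiecewiseLinear.exists_isLeast_and_hasResidueMin {f : AddCircle (1 : ℝ) → ℝ}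
    (hf : IsRatPiecewiseLinear f) (b : ℚ) :
    ∃ M : ℕ, 1 ≤ M ∧ ∃ c, IsLeast (range f) c ∧
      HasResidueMin M (fun q => f '' ((↑) '' grid (b : ℝ) q)) c := by
  obtain ⟨m, t, l, ht0, ht1, ht, hpiece⟩ := hf
  let arc (i : Fin m) : Set ℝ := Icc (t i.castSucc) (t i.succ)
  have hcover : ⋃ i, ((↑) : ℝ → AddCircle (1 : ℝ)) '' arc i = univ :=
    iUnion_coe_image_Icc_castSucc_succ (t := fun j => (t j : ℝ)) (by simp [ht0, ht1])
  have hdvd (j) : (t j).den ∣ ∏ j, (t j).den := Finset.dvd_prod_of_mem _ (Finset.mem_univ j)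
  choose c hc hgrid using fun i => exists_isLeast_and_hasResidueMin_of_affine
    (F := fun s => f s) (ht Fin.castSucc_lt_succ) (hdvd _) (hdvd _)
    (fun s hs => hpiece i s hs.1 hs.2) b
  have : Nonempty (Fin m) := nonempty_of_nonempty_iUnion (hcover ▸ univ_nonempty)
  obtain ⟨i, hi⟩ := Finite.exists_min c
  refine ⟨∏ j, (t j).den, Finset.prod_pos fun j _ => (t j).den_pos, c i, ?_, fun Q => ?_⟩
  · rw [← image_univ, ← hcover, image_iUnion]
    simp only [image_image]
    exact isLeast_iUnion_of_forall_le hc hi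
  · obtain ⟨γ, hγ, hleast⟩ := HasResidueMin.iUnion hgrid hi Q
    refine ⟨γ, hγ, ?_⟩
    filter_upwards [hleast, eventually_ne_atTop 0] with q hleast hq hmod
    rw [image_image_eq_iUnion_image_inter hcover (preimage_coe_image_coe_grid _ hq)]
    exact hleast hmod

/-- **Lemma (minimum of a piecewise-linear function on a coset `b/q + ⟨1/q⟩`).** -/
theorem stmt10 (f : AddCircle (1 : ℝ) → ℝ) (hf : Continuous f)
    (hpl : IsRatPiecewiseLinear f) (b : ℚ) :
    ∃ M : ℕ, 1 ≤ M ∧ ∀ Q : ℕ, Q < M → ∃ γ : ℚ, 0 ≤ γ ∧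
      ∃ q₀ : ℕ, ∀ q : ℕ, q₀ ≤ q → q % M = Q →
        sInf (f '' {p : AddCircle (1 : ℝ) |
            ∃ r : ℤ, p = (((b : ℝ) / q + (r : ℝ) / q : ℝ) : AddCircle (1 : ℝ))}) =
          sInf (Set.range f) + (γ : ℝ) / q := by
  obtain ⟨M, hM, c, hc, hgrid⟩ := hpl.exists_isLeast_and_hasResidueMin b
  refine ⟨M, hM, fun Q _ => ?_⟩
  obtain ⟨γ, hγ, hleast⟩ := hgrid Q
  obtain ⟨q₀, hq₀⟩ := eventually_atTop.1 hleast
  refine ⟨γ, hγ, q₀, fun q hq hmod => ?_⟩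
  have hcoset : {p : AddCircle (1 : ℝ) | ∃ r : ℤ, p = ((b / q + r / q : ℝ) : AddCircle (1 : ℝ))}
      = (↑) '' grid (b : ℝ) q := by
    ext p
    simp [grid, add_div, eq_comm]
  rw [hcoset, (hq₀ q hq hmod).csInf_eq, hc.csInf_eq]
end
end

section
/- Let C ≥ 0 be a real number and let a₁, a₂ be nonzero integers. Then for every natural number k there exists N₀ such that for every natural number N ≥ N₀, every pair of integers b₁, b₂ with |b₁| ≤ CN, |b₂| ≤ CN, gcd(a₁, a₂, b₁, b₂) = 1 and a₁b₂ ≠ a₂b₁, and every set I of N consecutive integers, one has |{ x ∈ I : gcd(a₁x + b₁, a₂x + b₂) = 1 }| ≥ k. -/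
/-!
Only primes dividing the determinant `D = a₁ b₂ - a₂ b₁` can divide both `a₁ x + b₁` and
`a₂ x + b₂`, and each such prime does so for `x` in at most one residue class. With `s = ω(D)`,
inclusion-exclusion and the Chinese remainder theorem leave at least `N ∏_{p ∣ D} (1 - 1/p) - 2 ^ s`
good `x` among `N` consecutive ones. The `i`-th prime divisor of `D` is at least `i + 1`, so
`∏ (1 - 1/p) ≥ 1 / (s + 1)` and `(s + 1)! ≤ |D| = O(N)`; the factorial beats `(s + 1) (2 ^ s + k)`.
-/

open Asymptotics Filter Finset

open scoped Nat

section Sieve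

variable {α ι : Type*}

theorem card_filter_forall_not_eq_sum_powerset {R : Type*} [CommRing R] (A : Finset α)
    (S : Finset ι) (P : ι → α → Prop) [∀ i, DecidablePred (P i)] :
    (#{x ∈ A | ∀ i ∈ S, ¬ P i x} : R) =
      ∑ T ∈ S.powerset, (-1) ^ #T * (#{x ∈ A | ∀ i ∈ T, P i x} : R) := by
  have indicator (T : Finset ι) (Q : ι → α → Prop) [∀ i, DecidablePred (Q i)] :
      (#{x ∈ A | ∀ i ∈ T, Q i x} : R) = ∑ x ∈ A, ∏ i ∈ T, if Q i x then 1 else 0 := by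
    simp [prod_ite_zero]
  have ite_not (i : ι) (x : α) :
      (if ¬ P i x then 1 else 0 : R) = 1 + -(if P i x then 1 else 0) := by
    split_ifs <;> simp_all
  simp_rw [indicator, ite_not, prod_one_add, prod_neg, mul_sum]
  exact sum_comm

theorem exists_forall_modEq_iff_modEq_prod {T : Finset ι} {n : ι → ℕ} (hn : ∀ i ∈ T, n i ≠ 0)
    (hT : (T : Set ι).Pairwise (Function.onFun Nat.Coprime n)) (r : ι → ℤ) :
    ∃ v : ℤ, ∀ x : ℤ, (∀ i ∈ T, x ≡ r i [ZMOD n i]) ↔ x ≡ v [ZMOD (∏ i ∈ T, n i : ℕ)] := by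
  obtain ⟨v, hv⟩ := Nat.chineseRemainderOfFinset (fun i ↦ (r i % n i).toNat) n T hn hT
  have hvr : ∀ i ∈ T, (v : ℤ) ≡ r i [ZMOD n i] := fun i hi ↦ by
    have h := Int.natCast_modEq_iff.2 (hv i hi)
    rw [Int.toNat_of_nonneg (Int.emod_nonneg _ (mod_cast hn i hi))] at h
    exact h.trans (Int.mod_modEq _ _)
  refine ⟨v, fun x ↦ ⟨fun hx ↦ ?_, fun hx i hi ↦ ?_⟩⟩
  · rw [Int.modEq_iff_dvd, Nat.cast_prod]
    exact prod_dvd_of_coprime (fun i hi j hj hij ↦ (hT hi hj hij).isCoprime)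
      fun i hi ↦ ((hx i hi).trans (hvr i hi).symm).dvd
  · exact (hx.of_dvd (mod_cast dvd_prod_of_mem n hi)).trans (hvr i hi)

theorem abs_card_Ico_filter_modEq_sub_le_one {n : ℕ} (hn : n ≠ 0) (v m : ℤ) (N : ℕ) :
    |(#{x ∈ Ico m (m + N) | x ≡ v [ZMOD n]} : ℝ) - N / n| ≤ 1 := by
  have hn' : (0 : ℤ) < n := by positivity
  set u : ℚ := (m - v) / n
  have hshift : (((m + N : ℤ) : ℚ) - v) / (n : ℤ) = u + N / n := by
    push_cast; ring
  have hcard : (#{x ∈ Ico m (m + N) | x ≡ v [ZMOD n]} : ℤ) = ⌈u + (N : ℚ) / n⌉ - ⌈u⌉ := by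
    rw [Int.Ico_filter_modEq_card _ _ hn', hshift]
    exact max_eq_left (sub_nonneg.2 (Int.ceil_le_ceil (le_add_of_nonneg_right (by positivity))))
  have hQ : |(#{x ∈ Ico m (m + N) | x ≡ v [ZMOD n]} : ℚ) - N / n| ≤ 1 := by
    rw [← Int.cast_natCast, hcard, Int.cast_sub, abs_le]
    constructor <;> linarith [Int.le_ceil u, Int.ceil_lt_add_one u, Int.le_ceil (u + (N : ℚ) / n),
      Int.ceil_lt_add_one (u + (N : ℚ) / n)]
  have hR := (Rat.cast_le (K := ℝ)).2 hQ
  push_cast at hR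
  exact hR

theorem abs_card_Ico_filter_forall_not_modEq_sub_le {S : Finset ι} {n : ι → ℕ}
    (hn : ∀ i ∈ S, n i ≠ 0) (hS : (S : Set ι).Pairwise (Function.onFun Nat.Coprime n))
    (r : ι → ℤ) (m : ℤ) (N : ℕ) :
    |(#{x ∈ Ico m (m + N) | ∀ i ∈ S, ¬ x ≡ r i [ZMOD n i]} : ℝ) -
      N * ∏ i ∈ S, (1 - 1 / (n i : ℝ))| ≤ 2 ^ #S := by
  have hclass : ∀ T ∈ S.powerset,
      |(#{x ∈ Ico m (m + N) | ∀ i ∈ T, x ≡ r i [ZMOD n i]} : ℝ) - N / (∏ i ∈ T, n i : ℕ)| ≤ 1 := by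
    intro T hT
    have hTS : T ⊆ S := mem_powerset.1 hT
    have hnT : ∀ i ∈ T, n i ≠ 0 := fun i hi ↦ hn i (hTS hi)
    obtain ⟨v, hv⟩ := exists_forall_modEq_iff_modEq_prod hnT (hS.mono (mod_cast hTS)) r
    simp_rw [hv]
    exact abs_card_Ico_filter_modEq_sub_le_one (prod_ne_zero_iff.2 hnT) v m N
  have hprod : N * ∏ i ∈ S, (1 - 1 / (n i : ℝ)) =
      ∑ T ∈ S.powerset, (-1) ^ #T * (N / (∏ i ∈ T, n i : ℕ) : ℝ) := by
    simp_rw [sub_eq_add_neg, prod_one_add, prod_neg, mul_sum]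
    refine sum_congr rfl fun T _ ↦ ?_
    simp only [one_div, prod_inv_distrib, Nat.cast_prod]
    ring
  rw [card_filter_forall_not_eq_sum_powerset, hprod, ← sum_sub_distrib]
  calc
    _ ≤ ∑ T ∈ S.powerset, |(-1) ^ #T *
          (#{x ∈ Ico m (m + N) | ∀ i ∈ T, x ≡ r i [ZMOD n i]} : ℝ) -
          (-1) ^ #T * (N / (∏ i ∈ T, n i : ℕ) : ℝ)| := abs_sum_le_sum_abs _ _
    _ ≤ ∑ _ ∈ S.powerset, (1 : ℝ) := by
      refine sum_le_sum fun T hT ↦ ?_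
      rw [← mul_sub, abs_mul, abs_neg_one_pow, one_mul]
      exact hclass T hT
    _ = 2 ^ #S := by simp

end Sieve

section ProductBounds

theorem prod_range_card_le_prod {R : Type*} [CommSemiring R] [PartialOrder R] [IsOrderedRing R]
    {f : ℕ → R} {a : ℕ} (hf : MonotoneOn f (Set.Ici a)) (hf₀ : ∀ n, a ≤ n → 0 ≤ f n)
    {S : Finset ℕ} (hS : ∀ n ∈ S, a ≤ n) :
    ∏ i ∈ range #S, f (a + i) ≤ ∏ n ∈ S, f n := by
  induction S using Finset.induction_on_max with
  | empty => simp
  | insert p S hmax ih =>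
    have hpS : p ∉ S := fun h ↦ (hmax p h).false
    have hS' : ∀ n ∈ S, a ≤ n := fun n hn ↦ hS n (mem_insert_of_mem hn)
    have hap : a ≤ p := hS p (mem_insert_self p S)
    have hcard : a + #S ≤ p := by
      have hsub : S ⊆ Ico a p := fun n hn ↦ mem_Ico.2 ⟨hS' n hn, hmax n hn⟩
      have := card_le_card hsub
      rw [Nat.card_Ico] at this
      omega
    rw [card_insert_of_notMem hpS, prod_range_succ, prod_insert hpS, mul_comm]
    exact mul_le_mul (hf (Nat.le_add_right a _) hap hcard) (ih hS')
      (prod_nonneg fun i _ ↦ hf₀ _ (Nat.le_add_right a i)) (hf₀ p hap)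

theorem factorial_card_add_one_le_prod {S : Finset ℕ} (hS : ∀ n ∈ S, 2 ≤ n) :
    (#S + 1)! ≤ ∏ n ∈ S, n := by
  calc
    (#S + 1)! = ∏ i ∈ range #S, (2 + i) := by
      rw [← prod_range_add_one_eq_factorial, prod_range_succ']
      simp [add_comm, add_left_comm]
    _ ≤ ∏ n ∈ S, n := prod_range_card_le_prod monotoneOn_id (fun n _ ↦ n.zero_le) hS

theorem one_div_card_add_one_le_prod_one_sub_one_div {S : Finset ℕ} (hS : ∀ n ∈ S, 2 ≤ n) :
    1 / (#S + 1 : ℝ) ≤ ∏ n ∈ S, (1 - 1 / (n : ℝ)) := by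
  have htelescope (s : ℕ) : ∏ i ∈ range s, (1 - 1 / ((2 + i : ℕ) : ℝ)) = 1 / (s + 1 : ℝ) := by
    induction s with
    | zero => simp
    | succ s ih =>
      rw [prod_range_succ, ih]
      push_cast
      field_simp
      ring
  rw [← htelescope]
  refine prod_range_card_le_prod (f := fun n ↦ 1 - 1 / (n : ℝ)) (fun n hn p _ hnp ↦ ?_)
    (fun n hn ↦ ?_) hS
  · have hn' : 0 < n := zero_lt_two.trans_le hn
    dsimp only
    gcongr
  · exact sub_nonneg.2 (div_le_one_of_le₀ (mod_cast one_le_two.trans hn) n.cast_nonneg)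

end ProductBounds

section PrimeFactors

theorem factorial_card_primeFactors_add_one_le {n : ℕ} (hn : n ≠ 0) :
    (#n.primeFactors + 1)! ≤ n :=
  (factorial_card_add_one_le_prod fun _ hp ↦ (Nat.prime_of_mem_primeFactors hp).two_le).trans
    (Nat.le_of_dvd hn.pos n.prod_primeFactors_dvd)

theorem eventually_forall_apply_card_primeFactors_le {f : ℕ → ℝ}
    (hf : f =o[atTop] fun s ↦ ((s + 1)! : ℝ)) (K : ℝ) :
    ∀ᶠ N : ℕ in atTop, ∀ n : ℕ, n ≠ 0 → (n : ℝ) ≤ K * N → f #n.primeFactors ≤ N := by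
  obtain ⟨W, hW⟩ := eventually_atTop.1 ((hf.const_mul_left K).def one_pos)
  have hsmall : ∀ᶠ N : ℕ in atTop, ∀ s ∈ range W, f s ≤ N :=
    (eventually_all_finset _).2 fun s _ ↦ tendsto_natCast_atTop_atTop.eventually_ge_atTop (f s)
  filter_upwards [hsmall] with N hN n hn hnK
  rcases lt_or_ge #n.primeFactors W with hlt | hge
  · exact hN _ (mem_range.2 hlt)
  · have hK : 0 < K := pos_of_mul_pos_left
      ((Nat.cast_pos.2 hn.pos).trans_le hnK) N.cast_nonneg
    refine le_of_mul_le_mul_left ?_ hK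
    calc
      K * f #n.primeFactors ≤ ‖K * f #n.primeFactors‖ := Real.le_norm_self _
      _ ≤ ((#n.primeFactors + 1)! : ℝ) := by simpa using hW _ hge
      _ ≤ n := mod_cast factorial_card_primeFactors_add_one_le hn
      _ ≤ K * N := hnK

theorem succ_mul_two_pow_add_isLittleO_factorial_succ (c : ℝ) :
    (fun s : ℕ ↦ (s + 1 : ℝ) * (2 ^ s + c)) =o[atTop] fun s ↦ ((s + 1)! : ℝ) := by
  have hpow (a : ℝ) : (fun s : ℕ ↦ a ^ s) =o[atTop] fun s ↦ (s ! : ℝ) :=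
    isLittleO_of_tendsto (fun s hs ↦ absurd hs (mod_cast s.factorial_ne_zero))
      (FloorSemiring.tendsto_pow_div_factorial_atTop a)
  have hconst : (fun _ : ℕ ↦ c) =o[atTop] fun s ↦ (s ! : ℝ) := by
    simpa using (hpow 1).const_mul_left c
  simpa [Nat.factorial_succ] using
    (isBigO_refl (fun s : ℕ ↦ (s + 1 : ℝ)) atTop).mul_isLittleO ((hpow 2).add hconst)

end PrimeFactors

section LinearForms

theorem abs_mul_sub_mul_le {R : Type*} [Ring R] [LinearOrder R] [IsOrderedRing R]
    {a₁ a₂ b₁ b₂ M : R} (hb₁ : |b₁| ≤ M) (hb₂ : |b₂| ≤ M) :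
    |a₁ * b₂ - a₂ * b₁| ≤ (|a₁| + |a₂|) * M := by
  calc
    |a₁ * b₂ - a₂ * b₁| ≤ |a₁| * |b₂| + |a₂| * |b₁| := by
      simpa only [abs_mul] using abs_sub (a₁ * b₂) (a₂ * b₁)
    _ ≤ |a₁| * M + |a₂| * M := by gcongr
    _ = (|a₁| + |a₂|) * M := (add_mul _ _ _).symm

variable {a₁ a₂ b₁ b₂ : ℤ}

theorem exists_modEq_of_prime_dvd_of_dvd {p : ℤ} (hp : Prime p)
    (hndvd : ¬ (p ∣ a₁ ∧ p ∣ a₂ ∧ p ∣ b₁ ∧ p ∣ b₂)) :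
    ∃ r : ℤ, ∀ x : ℤ, p ∣ a₁ * x + b₁ → p ∣ a₂ * x + b₂ → x ≡ r [ZMOD p] := by
  by_cases hex : ∃ r : ℤ, p ∣ a₁ * r + b₁ ∧ p ∣ a₂ * r + b₂
  · obtain ⟨r, hr₁, hr₂⟩ := hex
    refine ⟨r, fun x hx₁ hx₂ ↦ Int.modEq_iff_dvd.2 (by_contra fun hxr ↦ hndvd ?_)⟩
    have dvd_coeff {a b : ℤ} (hr : p ∣ a * r + b) (hx : p ∣ a * x + b) : p ∣ a :=
      (hp.dvd_or_dvd (by simpa [mul_sub] using dvd_sub hr hx : p ∣ a * (r - x))).resolve_right hxr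
    have ha₁ := dvd_coeff hr₁ hx₁
    have ha₂ := dvd_coeff hr₂ hx₂
    exact ⟨ha₁, ha₂, (dvd_add_right (ha₁.mul_right r)).1 hr₁,
      (dvd_add_right (ha₂.mul_right r)).1 hr₂⟩
  · exact ⟨0, fun x hx₁ hx₂ ↦ (hex ⟨x, hx₁, hx₂⟩).elim⟩

theorem gcd_linear_eq_one_of_forall_prime (hdet : a₁ * b₂ - a₂ * b₁ ≠ 0) {x : ℤ}
    (hx : ∀ p ∈ (a₁ * b₂ - a₂ * b₁).natAbs.primeFactors,
      ¬ ((p : ℤ) ∣ a₁ * x + b₁ ∧ (p : ℤ) ∣ a₂ * x + b₂)) :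
    Int.gcd (a₁ * x + b₁) (a₂ * x + b₂) = 1 := by
  refine Nat.eq_one_iff_not_exists_prime_dvd.2 fun p hp hpd ↦ ?_
  have hp₁ : (p : ℤ) ∣ a₁ * x + b₁ := (Int.natCast_dvd_natCast.2 hpd).trans (Int.gcd_dvd_left ..)
  have hp₂ : (p : ℤ) ∣ a₂ * x + b₂ := (Int.natCast_dvd_natCast.2 hpd).trans (Int.gcd_dvd_right ..)
  have hpdet : (p : ℤ) ∣ a₁ * b₂ - a₂ * b₁ := by
    have h := dvd_sub (hp₂.mul_left a₁) (hp₁.mul_left a₂)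
    rwa [show a₁ * (a₂ * x + b₂) - a₂ * (a₁ * x + b₁) = a₁ * b₂ - a₂ * b₁ by ring] at h
  exact hx p (Nat.mem_primeFactors.2
    ⟨hp, Int.natCast_dvd.1 hpdet, Int.natAbs_ne_zero.2 hdet⟩) ⟨hp₁, hp₂⟩

theorem div_sub_two_pow_le_card_Ico_filter_gcd_eq_one
    (hgcd : Nat.gcd (Int.gcd a₁ a₂) (Int.gcd b₁ b₂) = 1) (hdet : a₁ * b₂ - a₂ * b₁ ≠ 0)
    (m : ℤ) (N : ℕ) :
    (N : ℝ) / (#(a₁ * b₂ - a₂ * b₁).natAbs.primeFactors + 1) -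
        2 ^ #(a₁ * b₂ - a₂ * b₁).natAbs.primeFactors ≤
      #{x ∈ Ico m (m + N) | Int.gcd (a₁ * x + b₁) (a₂ * x + b₂) = 1} := by
  set S := (a₁ * b₂ - a₂ * b₁).natAbs.primeFactors
  have hprime : ∀ p ∈ S, p.Prime := fun p ↦ Nat.prime_of_mem_primeFactors
  have hresidue : ∀ p : ℕ, ∃ r : ℤ, p ∈ S →
      ∀ x : ℤ, (p : ℤ) ∣ a₁ * x + b₁ → (p : ℤ) ∣ a₂ * x + b₂ → x ≡ r [ZMOD p] := by
    intro p
    by_cases hp : p ∈ S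
    · have hndvd : ¬ ((p : ℤ) ∣ a₁ ∧ (p : ℤ) ∣ a₂ ∧ (p : ℤ) ∣ b₁ ∧ (p : ℤ) ∣ b₂) :=
        fun ⟨ha₁, ha₂, hb₁, hb₂⟩ ↦ (hprime p hp).one_lt.ne' <| Nat.dvd_one.1 <| hgcd ▸
          Nat.dvd_gcd (Int.dvd_gcd ha₁ ha₂) (Int.dvd_gcd hb₁ hb₂)
      obtain ⟨r, hr⟩ := exists_modEq_of_prime_dvd_of_dvd
        (Nat.prime_iff_prime_int.1 (hprime p hp)) hndvd
      exact ⟨r, fun _ ↦ hr⟩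
    · exact ⟨0, fun h ↦ (hp h).elim⟩
  choose r hr using hresidue
  have hsieve := abs_card_Ico_filter_forall_not_modEq_sub_le (n := fun p : ℕ ↦ p)
    (fun p hp ↦ (hprime p hp).ne_zero)
    (fun p hp q hq hpq ↦ (Nat.coprime_primes (hprime p hp) (hprime q hq)).2 hpq) r m N
  have hdensity := one_div_card_add_one_le_prod_one_sub_one_div fun p hp ↦ (hprime p hp).two_le
  calc
    (N : ℝ) / (#S + 1) - 2 ^ #S = N * (1 / (#S + 1)) - 2 ^ #S := by rw [mul_one_div]
    _ ≤ N * ∏ p ∈ S, (1 - 1 / (p : ℝ)) - 2 ^ #S := by gcongr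
    _ ≤ #{x ∈ Ico m (m + N) | ∀ p ∈ S, ¬ x ≡ r p [ZMOD p]} :=
      sub_le_of_abs_sub_le_left hsieve
    _ ≤ #{x ∈ Ico m (m + N) | Int.gcd (a₁ * x + b₁) (a₂ * x + b₂) = 1} := by
      gcongr with x
      exact fun hx ↦ gcd_linear_eq_one_of_forall_prime hdet
        fun p hp ⟨hp₁, hp₂⟩ ↦ hx p hp (hr p hp x hp₁ hp₂)

end LinearForms

/-- **Lemma (coprime pairs in arithmetic progressions).** -/
theorem stmt11 (C : ℝ) (hC : 0 ≤ C) (a₁ a₂ : ℤ) (ha₁ : a₁ ≠ 0) (ha₂ : a₂ ≠ 0) :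
    ∀ k : ℕ, ∃ N₀ : ℕ, ∀ N : ℕ, N₀ ≤ N → ∀ b₁ b₂ : ℤ,
      (|b₁| : ℝ) ≤ C * N → (|b₂| : ℝ) ≤ C * N →
      Nat.gcd (Int.gcd a₁ a₂) (Int.gcd b₁ b₂) = 1 →
      a₁ * b₂ ≠ a₂ * b₁ →
      ∀ m : ℤ, k ≤ ((Finset.Ico m (m + (N : ℤ))).filter
        (fun x => Int.gcd (a₁ * x + b₁) (a₂ * x + b₂) = 1)).card := by
  intro k
  obtain ⟨N₀, hN₀⟩ := eventually_atTop.1 <| eventually_forall_apply_card_primeFactors_le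
    (succ_mul_two_pow_add_isLittleO_factorial_succ k) ((|(a₁ : ℝ)| + |(a₂ : ℝ)|) * C)
  refine ⟨N₀, fun N hN b₁ b₂ hb₁ hb₂ hgcd hne m ↦ ?_⟩
  have hdet : a₁ * b₂ - a₂ * b₁ ≠ 0 := sub_ne_zero.2 hne
  have hdet_le : ((a₁ * b₂ - a₂ * b₁).natAbs : ℝ) ≤ (|(a₁ : ℝ)| + |(a₂ : ℝ)|) * C * N := by
    rw [Nat.cast_natAbs, mul_assoc]
    push_cast
    exact abs_mul_sub_mul_le hb₁ hb₂
  have hlarge := hN₀ N hN _ (Int.natAbs_ne_zero.2 hdet) hdet_le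
  have hcount := div_sub_two_pow_le_card_Ico_filter_gcd_eq_one hgcd hdet m N
  rw [← le_div_iff₀' (by positivity)] at hlarge
  exact_mod_cast (le_sub_iff_add_le'.2 hlarge).trans hcount
end

section
/- Let U ⊆ (ℝ/ℤ)³ be a 2-dimensional proper subtorus with D(U) = 1/10. Then there is an automorphism σ of (ℝ/ℤ)³ given by permuting the three coordinates and negating some subset of the coordinates such that σ(U) is one of the four subtori U³ = ⟨(0,1,4),(1,0,0)⟩_ℝ, U⁴ = ⟨(0,2,3),(1,0,0)⟩_ℝ, U⁵ = ⟨(0,1,3),(1,0,1)⟩_ℝ, U⁶ = ⟨(0,1,2),(1,1,0)⟩_ℝ. Moreover, each of U³, U⁴, U⁵, U⁶ is a 2-dimensional proper subtorus of (ℝ/ℤ)³ with D-value equal to 1/10. -/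
noncomputable section

abbrev Torus (n : ℕ) : Type := Fin n → AddCircle (1 : ℝ)

def torusProj {n : ℕ} (x : Fin n → ℝ) : Torus n := fun i => (x i : AddCircle (1 : ℝ))

def spanTorus {n k : ℕ} (v : Fin k → Fin n → ℤ) : Set (Torus n) :=
  {p | ∃ t : Fin k → ℝ, p = torusProj fun i => ∑ j, t j * (v j i : ℝ)}

def IsSubtorus {n : ℕ} (k : ℕ) (S : Set (Torus n)) : Prop :=
  ∃ v : Fin k → Fin n → ℤ,
    LinearIndependent ℝ (fun j : Fin k => fun i : Fin n => (v j i : ℝ)) ∧ S = spanTorus v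

def IsProperSub {n : ℕ} (S : Set (Torus n)) : Prop :=
  ¬ S ⊆ ⋃ i : Fin n, {x : Torus n | x i = 0}

def DVal {n : ℕ} (S : Set (Torus n)) : ℝ :=
  sInf ((fun x : Torus n => ⨆ i, dist (x i) ((1 / 2 : ℝ) : AddCircle (1 : ℝ))) '' S)

def relSpec1 {n : ℕ} (U : Set (Torus n)) : Set ℝ :=
  {d | ∃ T : Set (Torus n), IsSubtorus 1 T ∧ IsProperSub T ∧ T ⊆ U ∧ d = DVal T}

def Spec (k n : ℕ) : Set ℝ :=
  {d | ∃ T : Set (Torus n), IsSubtorus k T ∧ IsProperSub T ∧ d = DVal T}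

def progSet (d : ℝ) (α β : ℚ) : Set ℝ :=
  {x | ∃ s : ℕ, x = d + 1 / ((α : ℝ) * s + (β : ℝ))}

/-- The automorphism of `(ℝ/ℤ)^n` given by permuting the coordinates by `π` and
negating the coordinates selected by `ε`. -/
def signedPerm {n : ℕ} (π : Equiv.Perm (Fin n)) (ε : Fin n → Bool) (x : Torus n) : Torus n :=
  fun i => if ε i then -x (π i) else x (π i)

def U3 : Set (Torus 3) := spanTorus ![![0, 1, 4], ![1, 0, 0]]
def U4 : Set (Torus 3) := spanTorus ![![0, 2, 3], ![1, 0, 0]]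
def U5 : Set (Torus 3) := spanTorus ![![0, 1, 3], ![1, 0, 1]]
def U6 : Set (Torus 3) := spanTorus ![![0, 1, 2], ![1, 1, 0]]

/-!
A 2-dimensional subtorus of `(ℝ/ℤ)³` is the kernel `{∑ aᵢ xᵢ = 0}` of a character whose coefficient
vector `a` is primitive: take for `a` the cross product of two spanning vectors, divided by its gcd.
At the point `(1/2, 1/2, 1/2)` such a character takes the value `(∑ |aᵢ|) / 2` modulo `1`. If
`∑ |aᵢ|` is even, the point lies on the subtorus. If it is odd, the value has norm `1/2`, and since
the character is `(∑ |aᵢ|)`-Lipschitz for the sup metric, the distance to the subtorus is at least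
`1 / (2 ∑ |aᵢ|)`; moving each coordinate by this amount in the direction of the sign of `aᵢ` shows
that it is attained. Distance `1/10` therefore means `∑ |aᵢ| = 5`, and the partitions of `5` into at
most three parts without a common factor are `4+1`, `3+2`, `3+1+1` and `2+2+1`.
-/

open Finset Matrix

section NormalVector

variable {n : ℕ}

/-- The generalized cross product of `n` vectors in `R^(n+1)`: its `j`-th entry is the signed
maximal minor omitting column `j`. For `n = 2` it is the usual cross product. -/
def normalVector {R : Type*} [CommRing R] (v : Fin n → Fin (n + 1) → R) : Fin (n + 1) → R :=
  fun j => (-1) ^ (j : ℕ) * det (of fun i k => v i (j.succAbove k))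

lemma normalVector_dotProduct {R : Type*} [CommRing R] (v : Fin n → Fin (n + 1) → R)
    (z : Fin (n + 1) → R) :
    normalVector v ⬝ᵥ z = det (of (Fin.cons z v : Fin (n + 1) → Fin (n + 1) → R)) := by
  rw [det_succ_row_zero, dotProduct]
  refine sum_congr rfl fun j _ => ?_
  rw [normalVector, mul_right_comm]
  rfl

lemma normalVector_intCast (R : Type*) [CommRing R] (v : Fin n → Fin (n + 1) → ℤ) :
    normalVector (fun i k => (v i k : R)) = fun j => ((normalVector v j : ℤ) : R) := by
  funext j
  simp only [normalVector, Int.cast_mul, Int.cast_pow, Int.cast_neg, Int.cast_one, Int.cast_det]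
  rfl

variable {K : Type*} [Field K] {v : Fin n → Fin (n + 1) → K}

lemma normalVector_dotProduct_ne_zero_iff {z : Fin (n + 1) → K} :
    normalVector v ⬝ᵥ z ≠ 0 ↔ LinearIndependent K v ∧ z ∉ Submodule.span K (Set.range v) := by
  rw [normalVector_dotProduct, ← isUnit_iff_ne_zero, ← isUnit_iff_isUnit_det,
    ← linearIndependent_rows_iff_isUnit, ← linearIndependent_finCons]
  rfl

lemma mem_span_range_iff_normalVector_dotProduct (hv : LinearIndependent K v)
    {z : Fin (n + 1) → K} :
    z ∈ Submodule.span K (Set.range v) ↔ normalVector v ⬝ᵥ z = 0 := by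
  have := normalVector_dotProduct_ne_zero_iff (v := v) (z := z)
  tauto

lemma normalVector_ne_zero_iff : normalVector v ≠ 0 ↔ LinearIndependent K v := by
  refine ⟨fun h => ?_, fun hv h => ?_⟩
  · obtain ⟨z, hz⟩ : ∃ z, normalVector v ⬝ᵥ z ≠ 0 := by
      by_contra! h'
      exact h (dotProduct_eq_zero _ h')
    exact (normalVector_dotProduct_ne_zero_iff.1 hz).1
  · have htop : Submodule.span K (Set.range v) = ⊤ := by
      refine Submodule.eq_top_iff'.2 fun z => ?_
      rw [mem_span_range_iff_normalVector_dotProduct hv, h, zero_dotProduct]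
    have hcard := finrank_span_eq_card hv
    rw [htop, finrank_top, Module.finrank_fin_fun, Fintype.card_fin] at hcard
    omega

lemma linearIndependent_intCast_iff [CharZero K] {v : Fin n → Fin (n + 1) → ℤ} :
    LinearIndependent K (fun i k => (v i k : K)) ↔ normalVector v ≠ 0 := by
  rw [← normalVector_ne_zero_iff, not_iff_not, normalVector_intCast, funext_iff, funext_iff]
  simp only [Pi.zero_apply, Int.cast_eq_zero]

end NormalVector

section Hyperplane

variable {n : ℕ}

/-- The kernel of the character `x ↦ ∑ i, a i • x i` of the torus. For primitive `a` these are the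
subtori of codimension one. -/
def hyperplane (a : Fin n → ℤ) : Set (Torus n) := {x | ∑ i, a i • x i = 0}

lemma zero_mem_hyperplane (a : Fin n → ℤ) : 0 ∈ hyperplane a := by
  simp [hyperplane]

lemma sum_zsmul_torusProj (a : Fin n → ℤ) (y : Fin n → ℝ) :
    ∑ i, a i • torusProj y i = ((fun i => (a i : ℝ)) ⬝ᵥ y : ℝ) := by
  simp only [torusProj, dotProduct, ← zsmul_eq_mul, ← AddCircle.coe_zsmul]
  exact (map_sum (QuotientAddGroup.mk' (AddSubgroup.zmultiples (1 : ℝ))) _ _).symm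

lemma torusProj_mem_hyperplane {a : Fin n → ℤ} {y : Fin n → ℝ} :
    torusProj y ∈ hyperplane a ↔ ∃ m : ℤ, (fun i => (a i : ℝ)) ⬝ᵥ y = m := by
  rw [hyperplane, Set.mem_ofPred_eq, sum_zsmul_torusProj, AddCircle.coe_eq_zero_iff]
  simp [eq_comm]

lemma torusProj_surjective : Function.Surjective (torusProj (n := n)) := fun x =>
  ⟨fun i => (x i).out, funext fun i => (x i).out_eq⟩

lemma torusProj_sub_intCast (y : Fin n → ℝ) (m : Fin n → ℤ) :
    torusProj (y - fun i => (m i : ℝ)) = torusProj y := by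
  funext i
  have : ((m i : ℝ) : AddCircle (1 : ℝ)) = 0 := (AddCircle.coe_eq_zero_iff 1).2 ⟨m i, by simp⟩
  simp [torusProj, this]

lemma spanTorus_eq_image_span {k : ℕ} (v : Fin k → Fin n → ℤ) :
    spanTorus v =
      torusProj '' (Submodule.span ℝ (Set.range fun j i => (v j i : ℝ)) : Set (Fin n → ℝ)) := by
  ext x
  simp only [spanTorus, Set.mem_ofPred_eq, Set.mem_image, SetLike.mem_coe,
    Submodule.mem_span_range_iff_exists_fun, exists_exists_eq_and]
  refine exists_congr fun t => ?_
  rw [eq_comm]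
  refine Eq.congr_left (congrArg torusProj (funext fun i => ?_))
  simp

lemma spanTorus_eq_hyperplane {v : Fin n → Fin (n + 1) → ℤ} {a : Fin (n + 1) → ℤ} {g : ℤ}
    (hg : g ≠ 0) (hv : normalVector v = g • a) (ha : univ.gcd a = 1) :
    spanTorus v = hyperplane a := by
  obtain ⟨p, hp⟩ := univ.gcd_eq_sum_mul a
  have hne : normalVector v ≠ 0 := by
    rw [hv]
    refine smul_ne_zero hg ?_
    rintro rfl
    simp [ha] at hp
  have mem_span (z : Fin (n + 1) → ℝ) :
      z ∈ Submodule.span ℝ (Set.range fun j i => (v j i : ℝ)) ↔ (fun i => (a i : ℝ)) ⬝ᵥ z = 0 := by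
    have hcast : normalVector (fun j i => (v j i : ℝ)) = (g : ℝ) • fun i => (a i : ℝ) := by
      rw [normalVector_intCast, hv]
      ext i
      simp
    rw [mem_span_range_iff_normalVector_dotProduct (linearIndependent_intCast_iff.2 hne),
      hcast, smul_dotProduct, smul_eq_zero_iff_right (Int.cast_ne_zero.2 hg)]
  rw [spanTorus_eq_image_span]
  ext x
  constructor
  · rintro ⟨z, hz, rfl⟩
    exact torusProj_mem_hyperplane.2 ⟨0, by rw [(mem_span z).1 hz, Int.cast_zero]⟩
  · obtain ⟨y, rfl⟩ := torusProj_surjective x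
    rw [torusProj_mem_hyperplane]
    rintro ⟨m, hm⟩
    have hp' : ∑ i, (a i : ℝ) * p i = 1 := by exact_mod_cast (hp.symm.trans ha)
    refine ⟨y - fun i => ((m * p i : ℤ) : ℝ), (mem_span _).2 ?_, torusProj_sub_intCast y _⟩
    rw [dotProduct_sub, hm, sub_eq_zero]
    simp only [dotProduct, Int.cast_mul, mul_left_comm _ (m : ℝ), ← mul_sum, hp', mul_one]

lemma IsSubtorus.exists_eq_hyperplane {U : Set (Torus (n + 1))} (hU : IsSubtorus n U) :
    ∃ a : Fin (n + 1) → ℤ, univ.gcd a = 1 ∧ U = hyperplane a := by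
  obtain ⟨v, hv, rfl⟩ := hU
  obtain ⟨a, hva, ha⟩ := univ.extract_gcd (normalVector v) univ_nonempty
  have hg : univ.gcd (normalVector v) ≠ 0 := by
    intro h
    refine linearIndependent_intCast_iff.1 hv (funext fun j => ?_)
    rw [hva j (mem_univ j), h, zero_mul, Pi.zero_apply]
  exact ⟨a, ha, spanTorus_eq_hyperplane hg (funext fun j => hva j (mem_univ j)) ha⟩

lemma signedPerm_surjective (π : Equiv.Perm (Fin n)) (ε : Fin n → Bool) :
    Function.Surjective (signedPerm π ε) := by
  intro y
  refine ⟨fun j => if ε (π.symm j) then -y (π.symm j) else y (π.symm j), funext fun i => ?_⟩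
  simp only [signedPerm, Equiv.symm_apply_apply]
  split_ifs <;> simp

lemma signedPerm_image_hyperplane {a b : Fin n → ℤ} {π : Equiv.Perm (Fin n)} {ε : Fin n → Bool}
    (h : ∀ i, b i = if ε i then -a (π i) else a (π i)) :
    signedPerm π ε '' hyperplane a = hyperplane b := by
  have hpre : hyperplane a = signedPerm π ε ⁻¹' hyperplane b := by
    ext x
    have hterm (i : Fin n) : b i • signedPerm π ε x i = a (π i) • x (π i) := by
      rw [h, signedPerm]
      split_ifs <;> simp
    simp only [hyperplane, Set.preimage_ofPred_eq, Set.mem_ofPred_eq, hterm,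
      Equiv.sum_comp π fun i => a i • x i]
  rw [hpre, Set.image_preimage_eq _ (signedPerm_surjective π ε)]

lemma exists_signedPerm_image_hyperplane {a b : Fin n → ℤ} {π : Equiv.Perm (Fin n)}
    (h : ∀ i, (b i).natAbs = (a (π i)).natAbs) :
    ∃ ε, signedPerm π ε '' hyperplane a = hyperplane b := by
  refine ⟨fun i => decide (b i ≠ a (π i)), signedPerm_image_hyperplane fun i => ?_⟩
  by_cases hi : b i = a (π i)
  · simp [hi]
  · simpa [hi] using (Int.natAbs_eq_natAbs_iff.1 (h i)).resolve_left hi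

end Hyperplane

section Distance

variable {n : ℕ}

/-- The point `(1/2, …, 1/2)` of the torus, from which `DVal` measures the distance. -/
def torusCenter (n : ℕ) : Torus n := fun _ => ((1 / 2 : ℝ) : AddCircle (1 : ℝ))

lemma DVal_eq_infDist (S : Set (Torus n)) : DVal S = Metric.infDist (torusCenter n) S := by
  have hdist (x : Torus n) :
      ⨆ i, dist (x i) ((1 / 2 : ℝ) : AddCircle (1 : ℝ)) = dist (torusCenter n) x := by
    rw [dist_comm]
    refine le_antisymm (Real.iSup_le (fun i => dist_le_pi_dist x (torusCenter n) i) dist_nonneg) ?_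
    refine (dist_pi_le_iff (Real.iSup_nonneg fun i => dist_nonneg)).2 fun i => ?_
    exact le_ciSup (f := fun i => dist (x i) (torusCenter n i)) (Set.finite_range _).bddAbove i
  rw [DVal, sInf_image', Metric.infDist_eq_iInf]
  simp only [hdist]

lemma norm_coe_one_half : ‖((1 / 2 : ℝ) : AddCircle (1 : ℝ))‖ = 1 / 2 := by
  simpa using AddCircle.norm_half_period_eq (p := (1 : ℝ))

lemma isProperSub_of_DVal_lt {S : Set (Torus n)} (hS : S.Nonempty) (h : DVal S < 1 / 2) :
    IsProperSub S := by
  rw [DVal_eq_infDist, Metric.infDist_lt_iff hS] at h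
  obtain ⟨x, hx, hlt⟩ := h
  intro hsub
  obtain ⟨i, hi⟩ := Set.mem_iUnion.1 (hsub hx)
  have hle := dist_le_pi_dist (torusCenter n) x i
  rw [show x i = 0 from hi, dist_zero_right, torusCenter, norm_coe_one_half] at hle
  exact hle.not_gt hlt

lemma even_zsmul_coe_one_half {k : ℤ} (hk : Even k) :
    k • ((1 / 2 : ℝ) : AddCircle (1 : ℝ)) = 0 := by
  obtain ⟨m, rfl⟩ := hk
  rw [← AddCircle.coe_zsmul, AddCircle.coe_eq_zero_iff]
  exact ⟨m, by push_cast [zsmul_eq_mul]; ring⟩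

lemma odd_zsmul_coe_one_half {k : ℤ} (hk : Odd k) :
    k • ((1 / 2 : ℝ) : AddCircle (1 : ℝ)) = ((1 / 2 : ℝ) : AddCircle (1 : ℝ)) := by
  obtain ⟨m, rfl⟩ := hk
  rw [add_zsmul, one_zsmul, even_zsmul_coe_one_half (even_two_mul m), zero_add]

lemma sum_zsmul_torusCenter (a : Fin n → ℤ) :
    ∑ i, a i • torusCenter n i = (∑ i, |a i|) • ((1 / 2 : ℝ) : AddCircle (1 : ℝ)) := by
  rw [sum_smul]
  refine sum_congr rfl fun i _ => ?_
  have hparity : Even (a i - |a i|) := by grind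
  rw [torusCenter, ← sub_eq_zero, ← sub_smul, even_zsmul_coe_one_half hparity]

lemma DVal_hyperplane_of_even {a : Fin n → ℤ} (h : Even (∑ i, |a i|)) :
    DVal (hyperplane a) = 0 := by
  have hmem : torusCenter n ∈ hyperplane a :=
    (sum_zsmul_torusCenter a).trans (even_zsmul_coe_one_half h)
  rw [DVal_eq_infDist, Metric.infDist_zero_of_mem hmem]

lemma norm_sum_zsmul_sub_le {ι E : Type*} [Fintype ι] [SeminormedAddCommGroup E] (a : ι → ℤ)
    (x y : ι → E) :
    ‖∑ i, a i • x i - ∑ i, a i • y i‖ ≤ (∑ i, |a i| : ℤ) * dist x y := by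
  rw [← sum_sub_distrib, Int.cast_sum, sum_mul]
  refine norm_sum_le_of_le _ fun i _ => ?_
  rw [← smul_sub, Int.cast_abs, ← Int.norm_eq_abs]
  refine (norm_zsmul_le (a i) _).trans (mul_le_mul_of_nonneg_left ?_ (norm_nonneg _))
  exact (dist_eq_norm (x i) (y i)).symm.trans_le (dist_le_pi_dist x y i)

lemma sum_abs_pos_of_odd {ι : Type*} [Fintype ι] {a : ι → ℤ} (h : Odd (∑ i, |a i|)) :
    0 < ∑ i, |a i| :=
  (sum_nonneg fun i _ => abs_nonneg (a i)).lt_of_ne fun h0 => by simp [← h0] at h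

lemma le_dist_torusCenter_of_mem_hyperplane {a : Fin n → ℤ} (h : Odd (∑ i, |a i|))
    {x : Torus n} (hx : x ∈ hyperplane a) :
    1 / (2 * (∑ i, |a i| : ℤ)) ≤ dist (torusCenter n) x := by
  have hpos : (0 : ℝ) < (∑ i, |a i| : ℤ) := Int.cast_pos.2 (sum_abs_pos_of_odd h)
  have := norm_sum_zsmul_sub_le a (torusCenter n) x
  rw [show ∑ i, a i • x i = 0 from hx, sub_zero, sum_zsmul_torusCenter, odd_zsmul_coe_one_half h,
    norm_coe_one_half] at this
  rw [div_le_iff₀ (by positivity)]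
  linarith

lemma exists_mem_hyperplane_dist_torusCenter_le {a : Fin n → ℤ} (h : Odd (∑ i, |a i|)) :
    ∃ x ∈ hyperplane a, dist (torusCenter n) x ≤ 1 / (2 * (∑ i, |a i| : ℤ)) := by
  set N : ℤ := ∑ i, |a i| with hN
  have hpos : (0 : ℝ) < N := Int.cast_pos.2 (sum_abs_pos_of_odd h)
  set e : Fin n → ℝ := fun i => SignType.sign (a i : ℝ) / (2 * N) with he
  have hdot : (fun i => (a i : ℝ)) ⬝ᵥ e = 1 / 2 := by
    simp only [dotProduct, he, ← mul_div_assoc, self_mul_sign, ← sum_div, ← Int.cast_abs,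
      ← Int.cast_sum, ← hN]
    field_simp
  refine ⟨torusCenter n + torusProj e, ?_, ?_⟩
  · simp only [hyperplane, Set.mem_ofPred_eq, Pi.add_apply, smul_add, sum_add_distrib]
    rw [sum_zsmul_torusProj, hdot, sum_zsmul_torusCenter, odd_zsmul_coe_one_half h, ← two_zsmul]
    exact even_zsmul_coe_one_half even_two
  · rw [dist_self_add_right, pi_norm_le_iff_of_nonneg (by positivity)]
    intro i
    have hsign : |(SignType.sign (a i : ℝ) : ℝ)| ≤ 1 := by
      cases SignType.sign (a i : ℝ) <;> simp
    calc ‖torusProj e i‖ ≤ ‖e i‖ := QuotientAddGroup.norm_mk_le_norm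
      _ = |(SignType.sign (a i : ℝ) : ℝ)| / (2 * N) := by
        rw [Real.norm_eq_abs, abs_div, abs_of_pos (by positivity : (0 : ℝ) < 2 * N)]
      _ ≤ 1 / (2 * N) := by gcongr

lemma DVal_hyperplane_of_odd {a : Fin n → ℤ} (h : Odd (∑ i, |a i|)) :
    DVal (hyperplane a) = 1 / (2 * (∑ i, |a i| : ℤ)) := by
  obtain ⟨x, hx, hdist⟩ := exists_mem_hyperplane_dist_torusCenter_le h
  rw [DVal_eq_infDist]
  refine le_antisymm ((Metric.infDist_le_dist_of_mem hx).trans hdist) ?_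
  exact (Metric.le_infDist ⟨x, hx⟩).2 fun y hy => le_dist_torusCenter_of_mem_hyperplane h hy

lemma DVal_hyperplane_eq_iff {a : Fin n → ℤ} {N : ℤ} (hN : Odd N) :
    DVal (hyperplane a) = 1 / (2 * N) ↔ ∑ i, |a i| = N := by
  have hN0 : N ≠ 0 := by
    rintro rfl
    simp at hN
  rcases Int.even_or_odd (∑ i, |a i|) with h | h
  · rw [DVal_hyperplane_of_even h]
    refine iff_of_false (by simp [eq_comm, hN0]) fun hsum => ?_
    exact Int.not_even_iff_odd.2 hN (hsum ▸ h)
  · rw [DVal_hyperplane_of_odd h, one_div, one_div, _root_.inv_inj,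
      mul_right_inj' two_ne_zero, Int.cast_inj]

lemma isSubtorus_isProperSub_DVal_spanTorus {v : Fin n → Fin (n + 1) → ℤ} {N : ℤ}
    (hgcd : univ.gcd (normalVector v) = 1) (hsum : ∑ i, |normalVector v i| = N) (hN : Odd N)
    (hN1 : 1 < N) :
    IsSubtorus n (spanTorus v) ∧ IsProperSub (spanTorus v) ∧ DVal (spanTorus v) = 1 / (2 * N) := by
  have hD : DVal (hyperplane (normalVector v)) = 1 / (2 * N) := (DVal_hyperplane_eq_iff hN).2 hsum
  have hv : normalVector v ≠ 0 := by
    intro h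
    rw [gcd_eq_zero_iff.2 fun i _ => congrFun h i] at hgcd
    exact zero_ne_one hgcd
  refine ⟨⟨v, linearIndependent_intCast_iff.2 hv, rfl⟩, ?_⟩
  rw [spanTorus_eq_hyperplane one_ne_zero (one_smul ℤ _).symm hgcd]
  refine ⟨isProperSub_of_DVal_lt ⟨0, zero_mem_hyperplane _⟩ ?_, hD⟩
  have : (1 : ℝ) < N := by exact_mod_cast hN1
  rw [hD]
  gcongr
  linarith

end Distance

lemma U3_eq_hyperplane : U3 = hyperplane ![0, 4, -1] :=
  spanTorus_eq_hyperplane one_ne_zero (by decide) (by decide)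

lemma U4_eq_hyperplane : U4 = hyperplane ![0, 3, -2] :=
  spanTorus_eq_hyperplane one_ne_zero (by decide) (by decide)

lemma U5_eq_hyperplane : U5 = hyperplane ![1, 3, -1] :=
  spanTorus_eq_hyperplane one_ne_zero (by decide) (by decide)

lemma U6_eq_hyperplane : U6 = hyperplane ![-2, 2, -1] :=
  spanTorus_eq_hyperplane one_ne_zero (by decide) (by decide)

lemma exists_perm_natAbs_eq_of_sum_eq_five {b : Fin 3 → ℕ} (hgcd : univ.gcd b = 1)
    (hsum : ∑ i, b i = 5) :
    ∃ π : Equiv.Perm (Fin 3),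
      ∃ k ∈ ({![0, 4, -1], ![0, 3, -2], ![1, 3, -1], ![-2, 2, -1]} : Finset (Fin 3 → ℤ)),
        ∀ i, (k i).natAbs = b (π i) := by
  revert hgcd
  rw [← Finset.Nat.mem_antidiagonalTuple] at hsum
  revert b
  decide +kernel

lemma exists_signedPerm_image_hyperplane_mem {a : Fin 3 → ℤ} (hgcd : univ.gcd a = 1)
    (hsum : ∑ i, |a i| = 5) :
    ∃ π ε, signedPerm π ε '' hyperplane a ∈ ({U3, U4, U5, U6} : Set (Set (Torus 3))) := by
  have hsum' : ∑ i, (a i).natAbs = 5 := by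
    zify
    exact hsum
  have hgcd' : univ.gcd (fun i => (a i).natAbs) = 1 := by
    rw [← Nat.dvd_one, ← Int.natCast_dvd_natCast, Nat.cast_one, ← hgcd]
    exact dvd_gcd fun i hi => Int.natCast_dvd.2 (gcd_dvd hi)
  obtain ⟨π, k, hk, hka⟩ := exists_perm_natAbs_eq_of_sum_eq_five hgcd' hsum'
  obtain ⟨ε, hε⟩ := exists_signedPerm_image_hyperplane hka
  refine ⟨π, ε, ?_⟩
  rw [hε, U3_eq_hyperplane, U4_eq_hyperplane, U5_eq_hyperplane, U6_eq_hyperplane]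
  simp only [Finset.mem_insert, Finset.mem_singleton] at hk
  rcases hk with rfl | rfl | rfl | rfl <;> simp

/-- Classification of the 2-dimensional proper subtori `U ⊆ (ℝ/ℤ)³` with `D(U) = 1/10`. -/
theorem stmt13 (U : Set (Torus 3)) (hU : IsSubtorus 2 U) (hUproper : IsProperSub U)
    (hD : DVal U = 1/10) :
    (∃ (π : Equiv.Perm (Fin 3)) (ε : Fin 3 → Bool),
      signedPerm π ε '' U = U3 ∨ signedPerm π ε '' U = U4 ∨
      signedPerm π ε '' U = U5 ∨ signedPerm π ε '' U = U6) ∧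
    (IsSubtorus 2 U3 ∧ IsProperSub U3 ∧ DVal U3 = 1/10) ∧
    (IsSubtorus 2 U4 ∧ IsProperSub U4 ∧ DVal U4 = 1/10) ∧
    (IsSubtorus 2 U5 ∧ IsProperSub U5 ∧ DVal U5 = 1/10) ∧
    (IsSubtorus 2 U6 ∧ IsProperSub U6 ∧ DVal U6 = 1/10) := by
  have h10 : (1 : ℝ) / 10 = 1 / (2 * (5 : ℤ)) := by norm_num
  rw [h10] at hD ⊢
  have hodd : Odd (5 : ℤ) := by decide
  refine ⟨?_, isSubtorus_isProperSub_DVal_spanTorus (by decide) (by decide) hodd (by decide),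
    isSubtorus_isProperSub_DVal_spanTorus (by decide) (by decide) hodd (by decide),
    isSubtorus_isProperSub_DVal_spanTorus (by decide) (by decide) hodd (by decide),
    isSubtorus_isProperSub_DVal_spanTorus (by decide) (by decide) hodd (by decide)⟩
  obtain ⟨a, hgcd, rfl⟩ := hU.exists_eq_hyperplane
  exact exists_signedPerm_image_hyperplane_mem hgcd ((DVal_hyperplane_eq_iff hodd).1 hD)
end
end

section
/- Let U ⊆ (ℝ/ℤ)⁴ be a 2-dimensional proper subtorus with D(U) = 1/4. Then there is an automorphism σ of (ℝ/ℤ)⁴ given by permuting the four coordinates and negating some subset of the coordinates such that σ(U) is one of the two subtori U¹ = ⟨(0,1,2,3),(1,0,0,0)⟩_ℝ, U² = ⟨(1,0,1,1),(1,1,0,2)⟩_ℝ. Moreover, each of U¹ and U² is a 2-dimensional proper subtorus of (ℝ/ℤ)⁴ with D-value equal to 1/4. -/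
noncomputable section

def U1 : Set (Torus 4) := spanTorus ![![0, 1, 2, 3], ![1, 0, 0, 0]]
def U2 : Set (Torus 4) := spanTorus ![![1, 0, 1, 1], ![1, 1, 0, 2]]

/-!
A two-dimensional subtorus of the 4-torus is cut out by two integer relations `r` and `b`, which can
be chosen to form a basis of the lattice of all its relations, with `r` of least `ℓ¹`-norm. In the
coordinates `e = 4 (x - 1/2)` the subtorus comes closer than `1/4` to the centre if and only if the
open cube `‖e‖ < 1` contains a point with `r · e ∈ 4ℤ + 2 ∑ rᵢ` and `b · e ∈ 4ℤ + 2 ∑ bᵢ`. By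
Hahn-Banach, `r · e = h` and `b · e = g` are solvable there once `|h| < ‖r‖₁` and
`|g + t h| < ‖b + t r‖₁` for all real `t`.

If `‖r‖₁` is even, then `h = 0` with `g = 0` or `g = 2` is solvable: by parity and minimality
`‖b + n r‖₁ > ‖r‖₁` for all integers `n`, which bounds `‖b + t r‖₁` for real `t`. If `‖r‖₁` is odd
and at least `5`, the values of `g` allowed for `h = 2` fill an interval longer than `4`. Properness
excludes relations in one coordinate, so `‖r‖₁ = 3`, and after a signed permutation
`r = (0, 0, 1, 2)` or `r = (0, 1, 1, 1)`. Now `b · e` must avoid `4ℤ + 2 ∑ bᵢ` on the slice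
`r · e = 2` of the cube; comparing its values at the vertices of that slice leaves finitely many
possibilities for `b` modulo `r`, each of which gives one of the two model tori.
-/

section

open Metric
open scoped Matrix

variable {ι κ : Type*} [Fintype ι] [Fintype κ]

section L1Norm

variable {R : Type*} [CommRing R] [LinearOrder R] [IsStrictOrderedRing R]

/-- The `ℓ¹`-norm; it is used over `ℤ` for integer relations and over `ℝ` as the norm dual to the
sup norm. -/
def l1Norm (x : ι → R) : R := ∑ i, |x i|

lemma l1Norm_nonneg (x : ι → R) : 0 ≤ l1Norm x :=
  Finset.sum_nonneg fun _ _ => abs_nonneg _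

lemma l1Norm_smul (c : R) (x : ι → R) : l1Norm (c • x) = |c| * l1Norm x := by
  simp only [l1Norm, Pi.smul_apply, smul_eq_mul, abs_mul, Finset.mul_sum]

lemma l1Norm_add_le (x y : ι → R) : l1Norm (x + y) ≤ l1Norm x + l1Norm y := by
  simp only [l1Norm, ← Finset.sum_add_distrib]
  exact Finset.sum_le_sum fun i _ => abs_add_le _ _

lemma l1Norm_add_smul_le (a b : ι → R) (s t : R) :
    l1Norm (b + s • a) ≤ l1Norm (b + t • a) + |s - t| * l1Norm a := by
  calc l1Norm (b + s • a) = l1Norm ((b + t • a) + (s - t) • a) := by congr 1; module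
    _ ≤ l1Norm (b + t • a) + |s - t| * l1Norm a :=
      (l1Norm_add_le _ _).trans_eq (by rw [l1Norm_smul])

end L1Norm

lemma exists_norm_le_one_dotProduct_eq_l1Norm (c : ι → ℝ) :
    ∃ e : ι → ℝ, ‖e‖ ≤ 1 ∧ c ⬝ᵥ e = l1Norm c := by
  refine ⟨fun i => SignType.sign (c i), (pi_norm_le_iff_of_nonneg zero_le_one).2 fun i => ?_, ?_⟩
  · cases SignType.sign (c i) <;> simp
  · exact Finset.sum_congr rfl fun i _ => self_mul_sign _

lemma l1Norm_le_of_forall_dotProduct_lt {c : ι → ℝ} {M : ℝ}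
    (h : ∀ e : ι → ℝ, ‖e‖ < 1 → c ⬝ᵥ e < M) : l1Norm c ≤ M := by
  have hclosed : IsClosed {e : ι → ℝ | c ⬝ᵥ e ≤ M} :=
    isClosed_le (Continuous.dotProduct continuous_const continuous_id) continuous_const
  have hball : closedBall (0 : ι → ℝ) 1 ⊆ {e | c ⬝ᵥ e ≤ M} := by
    rw [← closure_ball _ one_ne_zero]
    exact closure_minimal (fun e he => (h e (mem_ball_zero_iff.1 he)).le) hclosed
  obtain ⟨e, he, hce⟩ := exists_norm_le_one_dotProduct_eq_l1Norm c
  exact hce ▸ hball (mem_closedBall_zero_iff.2 he)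

lemma exists_dotProduct_eq (f : (κ → ℝ) →ₗ[ℝ] ℝ) : ∃ α : κ → ℝ, ∀ y, f y = α ⬝ᵥ y := by
  classical
  exact ⟨(dotProductEquiv ℝ κ).symm f, fun y => by
    rw [← dotProductEquiv_apply_apply, LinearEquiv.apply_symm_apply]⟩

lemma mulVecLin_surjective_of_forall_vecMul_ne_zero {A : Matrix κ ι ℝ}
    (h : ∀ α : κ → ℝ, α ≠ 0 → α ᵥ* A ≠ 0) : Function.Surjective A.mulVecLin := by
  rw [← LinearMap.range_eq_top]
  by_contra hA
  obtain ⟨f, hf, hker⟩ := Submodule.exists_le_ker_of_lt_top _ (lt_top_iff_ne_top.2 hA)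
  obtain ⟨α, hα⟩ := exists_dotProduct_eq f
  refine h α (fun h0 => hf (LinearMap.ext fun y => by simp [hα, h0])) ?_
  refine dotProduct_eq_zero _ fun e => ?_
  rw [← Matrix.dotProduct_mulVec, ← hα]
  exact hker ⟨e, rfl⟩

lemma exists_norm_lt_one_mulVec_eq (A : Matrix κ ι ℝ) (y : κ → ℝ)
    (h : ∀ α : κ → ℝ, α ≠ 0 → α ⬝ᵥ y < l1Norm (α ᵥ* A)) :
    ∃ e : ι → ℝ, ‖e‖ < 1 ∧ A *ᵥ e = y := by
  have hsurj : Function.Surjective A.mulVecLin := by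
    refine mulVecLin_surjective_of_forall_vecMul_ne_zero fun α hα h0 => ?_
    have hpos := h α hα
    have hneg := h (-α) (neg_ne_zero.2 hα)
    simp only [Matrix.neg_vecMul, h0, neg_zero, neg_dotProduct, l1Norm, Pi.zero_apply, abs_zero,
      Finset.sum_const_zero] at hpos hneg
    linarith
  have hopen : IsOpen (A.mulVecLin '' ball 0 1) :=
    A.mulVecLin.isOpenMap_of_finiteDimensional hsurj _ isOpen_ball
  by_contra! hy
  obtain ⟨f, hf⟩ := geometric_hahn_banach_open_point ((convex_ball 0 1).linear_image A.mulVecLin)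
    hopen (x := y) fun ⟨e, he, hAe⟩ => hy e (mem_ball_zero_iff.1 he) hAe
  obtain ⟨α, hα⟩ := exists_dotProduct_eq f.toLinearMap
  have hsep (e : ι → ℝ) (he : ‖e‖ < 1) : α ᵥ* A ⬝ᵥ e < α ⬝ᵥ y := by
    rw [← Matrix.dotProduct_mulVec, ← hα, ← hα]
    exact hf _ ⟨e, mem_ball_zero_iff.2 he, rfl⟩
  have hα0 : α ≠ 0 := by
    rintro rfl
    simpa using hsep 0 (by simp)
  exact (h α hα0).not_ge (l1Norm_le_of_forall_dotProduct_lt hsep)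

lemma exists_norm_lt_one_dotProduct_eq_and_eq {a b : ι → ℝ} {h g : ℝ} (hh : |h| < l1Norm a)
    (hg : ∀ t : ℝ, |g + t * h| < l1Norm (b + t • a)) :
    ∃ e : ι → ℝ, ‖e‖ < 1 ∧ a ⬝ᵥ e = h ∧ b ⬝ᵥ e = g := by
  suffices ∃ e : ι → ℝ, ‖e‖ < 1 ∧ Matrix.of ![a, b] *ᵥ e = ![h, g] by
    obtain ⟨e, he, hAe⟩ := this
    exact ⟨e, he, congrFun hAe 0, congrFun hAe 1⟩
  refine exists_norm_lt_one_mulVec_eq _ _ fun α hα => ?_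
  have hdot : α ⬝ᵥ ![h, g] = α 0 * h + α 1 * g := by simp [dotProduct, Fin.sum_univ_two]
  have hvec : α ᵥ* Matrix.of ![a, b] = α 0 • a + α 1 • b := by
    ext i
    simp [Matrix.vecMul, dotProduct, Fin.sum_univ_two]
  rw [hdot, hvec]
  refine (le_abs_self _).trans_lt ?_
  by_cases h1 : α 1 = 0
  · have h0 : α 0 ≠ 0 := fun h0 => hα (funext fun i => by fin_cases i <;> assumption)
    simpa [h1, l1Norm_smul, abs_mul] using mul_lt_mul_of_pos_left hh (abs_pos.2 h0)
  · have hscal : α 0 * h + α 1 * g = α 1 * (g + α 0 / α 1 * h) := by field_simp; ring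
    have hvect : α 0 • a + α 1 • b = α 1 • (b + (α 0 / α 1) • a) := by
      rw [smul_add, smul_smul, mul_div_cancel₀ _ h1, add_comm]
    rw [hscal, hvect, l1Norm_smul, abs_mul]
    exact mul_lt_mul_of_pos_left (hg _) (abs_pos.2 h1)

lemma exists_int_mul_add_between {α β : Type*} [Nonempty α] [Nonempty β] {L : α → ℝ} {F : β → ℝ}
    {c p : ℝ} (σ : ℝ) (hLF : ∀ t u, L u + c ≤ F t) (hp : 0 < p) (hpc : p < c) :
    ∃ k : ℤ, ∀ t u, L u < p * k + σ ∧ p * k + σ < F t := by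
  obtain ⟨t₀⟩ := ‹Nonempty β›
  have hbdd : BddAbove (Set.range L) :=
    ⟨F t₀ - c, Set.forall_mem_range.2 fun u => by linarith [hLF t₀ u]⟩
  have hF (t : β) : (⨆ u, L u) + c ≤ F t := by
    linarith [ciSup_le fun u => le_sub_iff_add_le.2 (hLF t u)]
  refine ⟨⌊((⨆ u, L u) - σ) / p⌋ + 1, fun t u => ?_⟩
  have hgt := Int.lt_floor_add_one (((⨆ u, L u) - σ) / p)
  have hle := Int.floor_le (((⨆ u, L u) - σ) / p)
  rw [div_lt_iff₀ hp] at hgt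
  rw [le_div_iff₀ hp] at hle
  push_cast
  constructor
  · linarith [le_ciSup hbdd u]
  · linarith [hF t]

lemma exists_norm_lt_one_dotProduct_eq {a : ι → ℝ} {h : ℝ} (hh : |h| < l1Norm a) :
    ∃ e : ι → ℝ, ‖e‖ < 1 ∧ a ⬝ᵥ e = h := by
  obtain ⟨s, hs, has⟩ := exists_norm_le_one_dotProduct_eq_l1Norm a
  have ha : 0 < l1Norm a := (abs_nonneg h).trans_lt hh
  refine ⟨(h / l1Norm a) • s, ?_, ?_⟩
  · have hlt : |h / l1Norm a| < 1 := by rwa [abs_div, abs_of_pos ha, div_lt_one ha]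
    rw [norm_smul, Real.norm_eq_abs]
    exact mul_lt_one_of_nonneg_of_lt_one_left (abs_nonneg _) hlt hs
  · rw [dotProduct_smul, has, smul_eq_mul, div_mul_cancel₀ _ ha.ne']

lemma exists_int_mem_Icc_of_ordConnected {s : Set ℝ} {x p σ : ℝ} (hs : s.OrdConnected)
    (hx : x ∈ s) (hp : 0 < p) (hns : ∀ k : ℤ, p * k + σ ∉ s) :
    ∃ k : ℤ, s ⊆ Set.Icc (p * k + σ) (p * (k + 1) + σ) := by
  have hle := (le_div_iff₀ hp).1 (Int.floor_le ((x - σ) / p))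
  have hlt := (div_lt_iff₀ hp).1 (Int.lt_floor_add_one ((x - σ) / p))
  refine ⟨⌊(x - σ) / p⌋, fun y hy => ?_⟩
  by_contra hout
  rw [Set.mem_Icc, not_and_or, not_le, not_le] at hout
  rcases hout with hlow | hhigh
  · exact hns _ (hs.out hy hx ⟨hlow.le, by linarith⟩)
  · refine hns (⌊(x - σ) / p⌋ + 1) (hs.out hx hy ?_)
    push_cast
    exact ⟨by linarith, hhigh.le⟩

lemma exists_int_dotProduct_mem_Icc {a b : ι → ℝ} {h p σ : ℝ} (hp : 0 < p) (hh : |h| < l1Norm a)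
    (hmiss : ∀ e : ι → ℝ, ‖e‖ < 1 → a ⬝ᵥ e = h → ∀ k : ℤ, b ⬝ᵥ e ≠ p * k + σ) :
    ∃ k : ℤ, ∀ e : ι → ℝ, ‖e‖ ≤ 1 → a ⬝ᵥ e = h →
      b ⬝ᵥ e ∈ Set.Icc (p * k + σ) (p * (k + 1) + σ) := by
  obtain ⟨e₀, he₀, hae₀⟩ := exists_norm_lt_one_dotProduct_eq hh
  have hplane : Convex ℝ {e : ι → ℝ | a ⬝ᵥ e = h} :=
    convex_hyperplane (dotProductBilin ℝ ℝ a).isLinear _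
  have himage : Convex ℝ ((b ⬝ᵥ ·) '' (ball 0 1 ∩ {e | a ⬝ᵥ e = h})) :=
    ((convex_ball 0 1).inter hplane).is_linear_image (dotProductBilin ℝ ℝ b).isLinear
  obtain ⟨k, hk⟩ := exists_int_mem_Icc_of_ordConnected himage.ordConnected
    ⟨e₀, ⟨mem_ball_zero_iff.2 he₀, hae₀⟩, rfl⟩ hp (σ := σ) <| by
      rintro k ⟨e, ⟨he, hae⟩, hbe⟩
      exact hmiss e (mem_ball_zero_iff.1 he) hae k hbe
  refine ⟨k, fun e he hae => ?_⟩
  have hclosed : IsClosed {x : ι → ℝ | b ⬝ᵥ x ∈ Set.Icc (p * k + σ) (p * (k + 1) + σ)} :=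
    isClosed_Icc.preimage (Continuous.dotProduct continuous_const continuous_id)
  refine closure_minimal (s := openSegment ℝ e₀ e) (fun x hx => ?_) hclosed
    (segment_subset_closure_openSegment (right_mem_segment ℝ e₀ e))
  have hxball : x ∈ interior (ball (0 : ι → ℝ) 1) := by
    refine (convex_ball 0 1).openSegment_interior_closure_subset_interior ?_ ?_ hx
    · rwa [isOpen_ball.interior_eq, mem_ball_zero_iff]
    · rwa [closure_ball _ one_ne_zero, mem_closedBall_zero_iff]
  exact hk ⟨x, ⟨interior_subset hxball, hplane.openSegment_subset hae₀ hae hx⟩, rfl⟩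

/-- The real vector with the same coordinates as an integer vector. -/
def realVec (r : ι → ℤ) : ι → ℝ := fun i => r i

omit [Fintype ι] in
lemma realVec_add_smul (r b : ι → ℤ) (x y : ℤ) :
    realVec (x • r + y • b) = (x : ℝ) • realVec r + (y : ℝ) • realVec b := by
  ext i
  simp [realVec]

lemma l1Norm_realVec (r : ι → ℤ) : l1Norm (realVec r) = l1Norm r := by
  simp [l1Norm, realVec]

lemma even_l1Norm_sub_sum (r : ι → ℤ) : Even (l1Norm r - ∑ i, r i) := by
  rw [l1Norm, ← Finset.sum_sub_distrib]
  exact Finset.even_sum _ fun i _ => by simp [Int.even_sub, even_abs]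

/-- The torus annihilated by `r` and `b` meets the open cube of radius `1/4` about the centre
`(1/2, …, 1/2)`; this is written in the coordinates `e = 4 (x - 1/2)`, in which the cube is the
open unit ball and `r · x ∈ ℤ` becomes `r · e ∈ 4ℤ + 2 ∑ rᵢ`. -/
def MeetsOpenCube (r b : ι → ℤ) : Prop :=
  ∃ e : ι → ℝ, ‖e‖ < 1 ∧ (∃ k : ℤ, realVec r ⬝ᵥ e = 4 * k + 2 * ↑(∑ i, r i)) ∧
    ∃ k : ℤ, realVec b ⬝ᵥ e = 4 * k + 2 * ↑(∑ i, b i)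

lemma meetsOpenCube_of_abs_lt {r b : ι → ℤ} {h g : ℝ} (hh : |h| < l1Norm r)
    (hg : ∀ t : ℝ, |g + t * h| < l1Norm (realVec b + t • realVec r))
    (hr : ∃ k : ℤ, h = 4 * k + 2 * ↑(∑ i, r i)) (hb : ∃ k : ℤ, g = 4 * k + 2 * ↑(∑ i, b i)) :
    MeetsOpenCube r b := by
  rw [← l1Norm_realVec] at hh
  obtain ⟨e, he, rfl, rfl⟩ := exists_norm_lt_one_dotProduct_eq_and_eq hh hg
  exact ⟨e, he, hr, hb⟩

/-- The pairs of relations left to classify: `r` is a shortest vector of the lattice of relations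
spanned by `r` and `b`, every nonzero relation involves at least two coordinates, and the torus
stays at distance at least `1/4` from the centre of the cube. -/
structure IsExtremalPair (r b : ι → ℤ) : Prop where
  shortest : ∀ x y : ℤ, (x ≠ 0 ∨ y ≠ 0) → l1Norm r ≤ l1Norm (x • r + y • b)
  abs_apply_lt : ∀ x y : ℤ, (x ≠ 0 ∨ y ≠ 0) → ∀ i, |(x • r + y • b) i| < l1Norm (x • r + y • b)
  not_meetsOpenCube : ¬ MeetsOpenCube r b

section ShortestRelation

lemma odd_sum_of_not_meetsOpenCube {r b : ι → ℤ} (h : ¬ MeetsOpenCube r b)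
    (hr : Even (∑ i, r i)) : Odd (∑ i, b i) := by
  rw [← Int.not_even_iff_odd]
  rintro ⟨m, hm⟩
  obtain ⟨n, hn⟩ := hr
  refine h ⟨0, by simp, ⟨-n, ?_⟩, -m, ?_⟩
  · rw [hn, dotProduct_zero]
    push_cast
    ring
  · rw [hm, dotProduct_zero]
    push_cast
    ring

lemma mul_one_sub_abs_sub_le_l1Norm {r b : ι → ℤ} {n : ℤ} {m : ℝ} (t : ℝ)
    (hn : m ≤ l1Norm (b + n • r)) :
    m - |t - n| * l1Norm r ≤ l1Norm (realVec b + t • realVec r) := by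
  have hslope := l1Norm_add_smul_le (realVec r) (realVec b) n t
  have hint : realVec b + (n : ℝ) • realVec r = realVec (b + n • r) := by
    simpa using (realVec_add_smul b r 1 n).symm
  rw [hint, l1Norm_realVec, l1Norm_realVec, abs_sub_comm] at hslope
  linarith

lemma abs_add_fract_mul (x y : ℤ) (hy : |y| ≤ 1) (s : ℝ) (hs₀ : 0 ≤ s) (hs₁ : s ≤ 1) :
    |(x : ℝ) + s * y| = (1 - s) * |(x : ℝ)| + s * |(x : ℝ) + y| := by
  have hsign : (0 ≤ x ∧ 0 ≤ x + y) ∨ (x ≤ 0 ∧ x + y ≤ 0) := by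
    rw [abs_le] at hy
    omega
  rcases hsign with ⟨hx, hxy⟩ | ⟨hx, hxy⟩
  · have hx' : (0 : ℝ) ≤ x := by exact_mod_cast hx
    have hxy' : (0 : ℝ) ≤ x + y := by exact_mod_cast hxy
    rw [abs_of_nonneg hx', abs_of_nonneg hxy', abs_of_nonneg (by nlinarith)]
    ring
  · have hx' : (x : ℝ) ≤ 0 := by exact_mod_cast hx
    have hxy' : (x + y : ℝ) ≤ 0 := by exact_mod_cast hxy
    rw [abs_of_nonpos hx', abs_of_nonpos hxy', abs_of_nonpos (by nlinarith)]
    ring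

-- On each interval `[n, n + 1]` no coordinate of `b + t r` changes sign, so the norm is affine.
lemma le_l1Norm_add_smul_of_abs_le_one {r b : ι → ℤ} {m : ℤ} (hr : ∀ i, |r i| ≤ 1)
    (hm : ∀ n : ℤ, m ≤ l1Norm (b + n • r)) (t : ℝ) :
    (m : ℝ) ≤ l1Norm (realVec b + t • realVec r) := by
  have haffine : l1Norm (realVec b + t • realVec r) =
      (1 - Int.fract t) * l1Norm (b + ⌊t⌋ • r) + Int.fract t * l1Norm (b + (⌊t⌋ + 1) • r) := by
    simp only [l1Norm, Int.cast_sum, Int.cast_abs, Finset.mul_sum,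
      ← Finset.sum_add_distrib]
    refine Finset.sum_congr rfl fun i _ => ?_
    have hi := abs_add_fract_mul (b i + ⌊t⌋ * r i) (r i) (hr i) (Int.fract t)
      (Int.fract_nonneg t) (Int.fract_lt_one t).le
    calc |(realVec b + t • realVec r) i|
        = |((b i + ⌊t⌋ * r i : ℤ) : ℝ) + Int.fract t * r i| := by
          congr 1
          simp only [Pi.add_apply, Pi.smul_apply, smul_eq_mul, realVec, Int.cast_add, Int.cast_mul]
          linear_combination (-(r i : ℝ)) * Int.floor_add_fract t
      _ = _ := by
          rw [hi]
          simp [add_mul, add_assoc]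
  have hfloor : (m : ℝ) ≤ l1Norm (b + ⌊t⌋ • r) := by exact_mod_cast hm ⌊t⌋
  have hceil : (m : ℝ) ≤ l1Norm (b + (⌊t⌋ + 1) • r) := by exact_mod_cast hm (⌊t⌋ + 1)
  rw [haffine]
  nlinarith [Int.fract_nonneg t, Int.fract_lt_one t]

namespace IsExtremalPair

variable {r b : ι → ℤ}

lemma l1Norm_le_l1Norm_add_smul (h : IsExtremalPair r b) (n : ℤ) :
    l1Norm r ≤ l1Norm (b + n • r) := by
  simpa [add_comm] using h.shortest n 1 (Or.inr one_ne_zero)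

lemma abs_left_apply_lt (h : IsExtremalPair r b) (i : ι) : |r i| < l1Norm r := by
  simpa using h.abs_apply_lt 1 0 (Or.inl one_ne_zero) i

lemma odd_l1Norm (h : IsExtremalPair r b) : Odd (l1Norm r) := by
  rw [← Int.not_even_iff_odd]
  intro hN
  have hsum : Even (∑ i, r i) := (Int.even_sub.1 (even_l1Norm_sub_sum r)).1 hN
  have hb := odd_sum_of_not_meetsOpenCube h.not_meetsOpenCube hsum
  have hinteger (n : ℤ) : l1Norm r + 1 ≤ l1Norm (b + n • r) := by
    have hodd : Odd (∑ i, (b + n • r) i) := by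
      simpa [Finset.sum_add_distrib, ← Finset.mul_sum] using hb.add_even (hsum.mul_left n)
    have hparity := even_l1Norm_sub_sum (b + n • r)
    have hle := h.l1Norm_le_l1Norm_add_smul n
    grind
  have hpos : 0 < l1Norm r := by
    obtain ⟨i, -⟩ : ∃ i, b i ≠ 0 := by
      by_contra! h0
      simp [h0] at hb
    exact (abs_nonneg _).trans_lt (h.abs_left_apply_lt i)
  have hreal (t : ℝ) : 2 < l1Norm (realVec b + t • realVec r) := by
    obtain hN2 | hN4 : l1Norm r = 2 ∨ 4 ≤ l1Norm r := by grind
    · have h3 : ((3 : ℤ) : ℝ) ≤ _ := le_l1Norm_add_smul_of_abs_le_one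
        (fun i => Int.lt_add_one_iff.1 (hN2 ▸ h.abs_left_apply_lt i)) (fun n => hN2 ▸ hinteger n) t
      push_cast at h3
      linarith
    · have hround := mul_one_sub_abs_sub_le_l1Norm (m := l1Norm r + 1) t
        (by exact_mod_cast hinteger (round t))
      have hN4' : (4 : ℝ) ≤ l1Norm r := by exact_mod_cast hN4
      nlinarith [abs_sub_round t]
  obtain ⟨m, hm⟩ := hb
  obtain ⟨n, hn⟩ := hsum
  refine h.not_meetsOpenCube (meetsOpenCube_of_abs_lt (h := 0) (g := 2) ?_ ?_ ⟨-n, ?_⟩ ⟨-m, ?_⟩)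
  · simpa using hpos
  · simpa using hreal
  · rw [hn]
    push_cast
    ring
  · rw [hm]
    push_cast
    ring

end IsExtremalPair

lemma nine_halves_le_add {f : ℝ → ℝ} (hint : ∀ (t : ℝ) (n : ℤ), 5 * (1 - |t - n|) ≤ f t)
    (hmid : ∀ t u, 2 * f ((t + u) / 2) ≤ f t + f u) (hdiff : ∀ t u, 5 * (t - u) ≤ f t + f u)
    (t u : ℝ) : -(f u + 2 * u) + 9 / 2 ≤ f t - 2 * t := by
  have hfloor := Int.floor_le ((t + u) / 2)
  have hlt := Int.lt_floor_add_one ((t + u) / 2)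
  have h1 := hint ((t + u) / 2) ⌊(t + u) / 2⌋
  have h2 := hint ((t + u) / 2) (⌊(t + u) / 2⌋ + 1)
  have h3 := hint u ⌊(t + u) / 2⌋
  have h4 := hint t (⌊(t + u) / 2⌋ + 1)
  have h5 := hmid t u
  have h6 := hdiff t u
  push_cast at h2 h4
  generalize f ((t + u) / 2) = fm at *
  generalize (⌊(t + u) / 2⌋ : ℝ) = n at *
  rw [abs_of_nonneg (by linarith)] at h1
  rw [abs_of_nonpos (by linarith)] at h2
  rcases abs_cases (u - n) with ⟨hu, _⟩ | ⟨hu, _⟩ <;>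
    rcases abs_cases (t - (n + 1)) with ⟨ht, _⟩ | ⟨ht, _⟩ <;>
      rw [hu] at h3 <;> rw [ht] at h4 <;> linarith

namespace IsExtremalPair

variable {r b : ι → ℤ}

lemma nine_halves_le_add_l1Norm (h : IsExtremalPair r b) (hN : 5 ≤ l1Norm r) (t u : ℝ) :
    -(l1Norm (realVec b + u • realVec r) + 2 * u) + 9 / 2 ≤
      l1Norm (realVec b + t • realVec r) - 2 * t := by
  have hN' : (5 : ℝ) ≤ l1Norm r := by exact_mod_cast hN
  refine nine_halves_le_add (f := fun t => l1Norm (realVec b + t • realVec r))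
    (fun t n => ?_) (fun t u => ?_) (fun t u => ?_) t u
  · have hn := mul_one_sub_abs_sub_le_l1Norm (m := ((l1Norm r : ℤ) : ℝ)) t
      (by exact_mod_cast h.l1Norm_le_l1Norm_add_smul n)
    have hnonneg := l1Norm_nonneg (realVec b + t • realVec r)
    rcases le_total (|t - n|) 1 with hle | hge <;> nlinarith
  · have hsplit : (2 : ℝ) • (realVec b + ((t + u) / 2) • realVec r) =
        (realVec b + t • realVec r) + (realVec b + u • realVec r) := by module
    have hle := l1Norm_add_le (realVec b + t • realVec r) (realVec b + u • realVec r)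
    rwa [← hsplit, l1Norm_smul, abs_two] at hle
  · have hsplit : (t - u) • realVec r =
        (realVec b + t • realVec r) + (-1 : ℝ) • (realVec b + u • realVec r) := by module
    have hle := l1Norm_add_le (realVec b + t • realVec r) ((-1 : ℝ) • (realVec b + u • realVec r))
    rw [← hsplit, l1Norm_smul, l1Norm_smul, l1Norm_realVec, abs_neg, abs_one, one_mul] at hle
    nlinarith [le_abs_self (t - u), abs_nonneg (t - u)]

lemma l1Norm_lt_five (h : IsExtremalPair r b) : l1Norm r < 5 := by
  by_contra! hN
  obtain ⟨k, hk⟩ := exists_int_mul_add_between (2 * ↑(∑ i, b i))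
    (h.nine_halves_le_add_l1Norm hN) four_pos (by norm_num)
  obtain ⟨m, hm⟩ : Odd (∑ i, r i) := by
    have hodd := h.odd_l1Norm
    have hparity := even_l1Norm_sub_sum r
    grind
  refine h.not_meetsOpenCube (meetsOpenCube_of_abs_lt (h := 2) ?_ (fun t => ?_) ⟨-m, ?_⟩ ⟨k, rfl⟩)
  · have hN' : (5 : ℝ) ≤ l1Norm r := by exact_mod_cast hN
    rw [abs_two]
    linarith
  · obtain ⟨hlow, hhigh⟩ := hk t t
    rw [abs_lt]
    constructor <;> linarith
  · rw [hm]
    push_cast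
    ring

lemma l1Norm_eq_three (h : IsExtremalPair r b) : l1Norm r = 3 := by
  obtain ⟨m, hm⟩ := h.odd_l1Norm
  have hlt := h.l1Norm_lt_five
  have hnonneg := l1Norm_nonneg r
  have hne : l1Norm r ≠ 1 := by
    intro h1
    have hr (i : ι) : r i = 0 := Int.abs_lt_one_iff.1 (h1 ▸ h.abs_left_apply_lt i)
    simp [l1Norm, hr] at h1
  omega

end IsExtremalPair

end ShortestRelation

section SignedPermutations

/-- The signed permutation of coordinates with permutation `π` and sign changes `ε`, acting on
vectors with entries in any type with a negation; on the torus it is `signedPerm`. -/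
def signedPermVec {α R : Type*} [Neg R] (π : Equiv.Perm α) (ε : α → Bool) (x : α → R) : α → R :=
  fun i => if ε i then -x (π i) else x (π i)

lemma signedPermVec_signedPermVec {α R : Type*} [InvolutiveNeg R] (π π' : Equiv.Perm α)
    (ε ε' : α → Bool) (x : α → R) :
    signedPermVec π ε (signedPermVec π' ε' x) =
      signedPermVec (π' * π) (fun i => xor (ε i) (ε' (π i))) x := by
  ext i
  by_cases hi : ε i <;> by_cases hj : ε' (π i) <;> simp [signedPermVec, hi, hj]

lemma signedPermVec_surjective {α R : Type*} [InvolutiveNeg R] (π : Equiv.Perm α)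
    (ε : α → Bool) : Function.Surjective (signedPermVec π ε : (α → R) → α → R) := fun x =>
  ⟨signedPermVec π⁻¹ (fun i => ε (π⁻¹ i)) x, by
    ext i
    by_cases hi : ε i <;> simp [signedPermVec, hi]⟩

lemma signedPermVec_smul_add_smul {α R : Type*} [CommRing R] (π : Equiv.Perm α) (ε : α → Bool)
    (x y : R) (r b : α → R) :
    signedPermVec π ε (x • r + y • b) = x • signedPermVec π ε r + y • signedPermVec π ε b := by
  ext i
  by_cases hi : ε i <;> simp [signedPermVec, hi, add_comm]

lemma realVec_signedPermVec {α : Type*} (π : Equiv.Perm α) (ε : α → Bool) (r : α → ℤ) :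
    realVec (signedPermVec π ε r) = signedPermVec π ε (realVec r) := by
  ext i
  by_cases hi : ε i <;> simp [signedPermVec, realVec, hi]

lemma abs_signedPermVec_apply {α R : Type*} [AddCommGroup R] [LinearOrder R] [IsOrderedAddMonoid R]
    (π : Equiv.Perm α) (ε : α → Bool) (x : α → R) (i : α) :
    |signedPermVec π ε x i| = |x (π i)| := by
  by_cases hi : ε i <;> simp [signedPermVec, hi]

variable (π : Equiv.Perm ι) (ε : ι → Bool)

lemma l1Norm_signedPermVec {R : Type*} [CommRing R] [LinearOrder R] [IsStrictOrderedRing R]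
    (x : ι → R) : l1Norm (signedPermVec π ε x) = l1Norm x := by
  simp only [l1Norm, abs_signedPermVec_apply]
  exact Equiv.sum_comp π fun i => |x i|

lemma signedPermVec_dotProduct_signedPermVec {R : Type*} [CommRing R] (a x : ι → R) :
    signedPermVec π ε a ⬝ᵥ signedPermVec π ε x = a ⬝ᵥ x := by
  rw [dotProduct, dotProduct, ← Equiv.sum_comp π fun i => a i * x i]
  exact Finset.sum_congr rfl fun i _ => by by_cases hi : ε i <;> simp [signedPermVec, hi]

lemma norm_signedPermVec_lt_iff (e : ι → ℝ) {c : ℝ} (hc : 0 < c) :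
    ‖signedPermVec π ε e‖ < c ↔ ‖e‖ < c := by
  simp only [pi_norm_lt_iff hc, Real.norm_eq_abs, abs_signedPermVec_apply]
  exact π.forall_congr_right (q := fun i => |e i| < c)

lemma even_sum_signedPermVec_sub_sum (r : ι → ℤ) :
    Even (∑ i, signedPermVec π ε r i - ∑ i, r i) := by
  have h := even_l1Norm_sub_sum r
  have hσ := even_l1Norm_sub_sum (signedPermVec π ε r)
  rw [l1Norm_signedPermVec] at hσ
  grind

variable {π ε}

lemma MeetsOpenCube.of_signedPermVec {r b : ι → ℤ}
    (h : MeetsOpenCube (signedPermVec π ε r) (signedPermVec π ε b)) : MeetsOpenCube r b := by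
  obtain ⟨e, he, hr, hb⟩ := h
  obtain ⟨e, rfl⟩ := signedPermVec_surjective π ε e
  have hsum {c : ι → ℤ} : (∃ k : ℤ, realVec (signedPermVec π ε c) ⬝ᵥ signedPermVec π ε e =
      4 * k + 2 * ↑(∑ i, signedPermVec π ε c i)) →
      ∃ k : ℤ, realVec c ⬝ᵥ e = 4 * k + 2 * ↑(∑ i, c i) := by
    rintro ⟨k, hk⟩
    obtain ⟨m, hm⟩ := even_sum_signedPermVec_sub_sum π ε c
    refine ⟨k + m, ?_⟩
    rw [realVec_signedPermVec, signedPermVec_dotProduct_signedPermVec] at hk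
    rw [hk, eq_add_of_sub_eq hm]
    push_cast
    ring
  exact ⟨e, (norm_signedPermVec_lt_iff π ε e one_pos).1 he, hsum hr, hsum hb⟩

lemma IsExtremalPair.signedPermVec {r b : ι → ℤ} (h : IsExtremalPair r b) :
    IsExtremalPair (signedPermVec π ε r) (signedPermVec π ε b) where
  shortest x y hxy := by
    simpa only [← signedPermVec_smul_add_smul, l1Norm_signedPermVec] using h.shortest x y hxy
  abs_apply_lt x y hxy i := by
    simpa only [← signedPermVec_smul_add_smul, l1Norm_signedPermVec, abs_signedPermVec_apply]
      using h.abs_apply_lt x y hxy (π i)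
  not_meetsOpenCube hσ := h.not_meetsOpenCube hσ.of_signedPermVec

lemma exists_monotone_toLex_signedPermVec {n : ℕ} (r b : Fin n → ℤ) :
    ∃ (π : Equiv.Perm (Fin n)) (ε : Fin n → Bool),
      Monotone (fun i => toLex (signedPermVec π ε r i, signedPermVec π ε b i)) ∧
        ∀ i, 0 ≤ toLex (signedPermVec π ε r i, signedPermVec π ε b i) := by
  let F (i : Fin n) : ℤ ×ₗ ℤ := toLex (r i, b i)
  let π := Tuple.sort fun i => |F i|
  let ε (i : Fin n) : Bool := decide (F (π i) < 0)
  have habs (i : Fin n) : toLex (signedPermVec π ε r i, signedPermVec π ε b i) = |F (π i)| := by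
    by_cases hi : F (π i) < 0
    · simp only [abs_of_neg hi, signedPermVec, ε, hi, decide_true, if_true]
      rfl
    · simp [abs_of_nonneg (not_lt.1 hi), signedPermVec, ε, hi, F]
  refine ⟨π, ε, ?_, fun i => habs i ▸ abs_nonneg _⟩
  simp only [habs]
  exact Tuple.monotone_sort fun i => |F i|

end SignedPermutations

section FourCoordinates

lemma IsExtremalPair.exists_int_dotProduct_bounds {r b : ι → ℤ} (h : IsExtremalPair r b) :
    ∃ k : ℤ, ∀ (d : ℤ) (e : ι → ℤ), 0 < d → (∀ i, |e i| ≤ d) → r ⬝ᵥ e = 2 * d →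
      d * (4 * k + 2 * ∑ i, b i) ≤ b ⬝ᵥ e ∧ b ⬝ᵥ e ≤ d * (4 * (k + 1) + 2 * ∑ i, b i) := by
  have hN := h.l1Norm_eq_three
  obtain ⟨m, hm⟩ : Odd (∑ i, r i) := by
    have hparity := even_l1Norm_sub_sum r
    grind
  obtain ⟨k, hk⟩ := exists_int_dotProduct_mem_Icc (a := realVec r) (b := realVec b) (h := 2)
    (σ := 2 * ↑(∑ i, b i)) four_pos (by norm_num [l1Norm_realVec, hN])
    fun e he hre k hbe =>
      h.not_meetsOpenCube ⟨e, he, ⟨-m, by rw [hre, hm]; push_cast; ring⟩, k, hbe⟩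
  refine ⟨k, fun d e hd he hre => ?_⟩
  have hd' : (0 : ℝ) < d := by exact_mod_cast hd
  have hdot (c : ι → ℤ) : realVec c ⬝ᵥ ((d : ℝ)⁻¹ • realVec e) = (c ⬝ᵥ e : ℤ) / d := by
    rw [dotProduct_smul, smul_eq_mul, inv_mul_eq_div]
    simp [dotProduct, realVec]
  have hnorm : ‖(d : ℝ)⁻¹ • realVec e‖ ≤ 1 := by
    rw [norm_smul, norm_inv, Real.norm_of_nonneg hd'.le, inv_mul_le_one₀ hd',
      pi_norm_le_iff_of_nonneg hd'.le]
    exact fun i => by simpa [realVec] using Int.cast_mono (R := ℝ) (he i)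
  have hmem := hk _ hnorm (by rw [hdot, hre]; push_cast; field_simp)
  rw [hdot, Set.mem_Icc, le_div_iff₀' hd', div_le_iff₀' hd'] at hmem
  exact_mod_cast hmem

lemma IsExtremalPair.right_of_left_eq_0012 {b : Fin 4 → ℤ} (h : IsExtremalPair ![0, 0, 1, 2] b)
    (hb₀ : 0 ≤ b 0) (hb₁ : b 0 ≤ b 1) :
    b 0 = 0 ∧ b 1 = 1 ∧ (b 3 = 2 * b 2 + 3 ∨ b 3 = 2 * b 2 - 3) := by
  have hnorm (m : ℤ) : l1Norm ((m - b 2) • ![0, 0, 1, 2] + (1 : ℤ) • b) =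
      b 0 + b 1 + |m| + |b 3 - 2 * b 2 + 2 * m| := by
    have h3 : (m - b 2) * 2 + b 3 = b 3 - 2 * b 2 + 2 * m := by ring
    simp [l1Norm, Fin.sum_univ_four, abs_of_nonneg hb₀, abs_of_nonneg (hb₀.trans hb₁), h3]
  have hshort (m : ℤ) : 3 - |m| - (b 0 + b 1) ≤ |b 3 - 2 * b 2 + 2 * m| := by
    have hle := h.shortest (m - b 2) 1 (Or.inr one_ne_zero)
    rw [h.l1Norm_eq_three, hnorm] at hle
    linarith
  have hs₁ := le_abs.1 (hshort 0)
  have hs₂ := le_abs.1 (hshort 1)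
  have hs₃ := le_abs.1 (hshort (-1))
  rw [abs_zero] at hs₁
  rw [abs_one] at hs₂
  rw [abs_neg, abs_one] at hs₃
  have hp : 0 < b 0 + b 1 := by
    simpa [l1Norm, Fin.sum_univ_four, abs_of_nonneg hb₀, abs_of_nonneg (hb₀.trans hb₁)]
      using h.abs_apply_lt (-b 2) 1 (Or.inr one_ne_zero) 3
  obtain ⟨k, hk⟩ := h.exists_int_dotProduct_bounds
  -- The vertices of the slice `r · e = 2` of the cube, scaled by `d`.
  have hv₁ := hk 1 ![1, 1, 0, 1] one_pos (by decide) (by decide)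
  have hv₂ := hk 1 ![-1, -1, 0, 1] one_pos (by decide) (by decide)
  have hv₃ := hk 2 ![2, 2, 2, 1] two_pos (by decide) (by decide)
  have hv₄ := hk 2 ![-2, -2, 2, 1] two_pos (by decide) (by decide)
  simp only [dotProduct, Fin.sum_univ_four, Matrix.cons_val] at hv₁ hv₂ hv₃ hv₄
  have hle : b 3 - 2 * b 2 ≤ 8 - 4 * (b 0 + b 1) := by linarith
  have hge : -(8 - 4 * (b 0 + b 1)) ≤ b 3 - 2 * b 2 := by linarith
  have hsum : b 0 + b 1 = 1 := by omega
  omega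

lemma IsExtremalPair.right_of_left_eq_0111 {b : Fin 4 → ℤ} (h : IsExtremalPair ![0, 1, 1, 1] b)
    (hb₀ : 0 ≤ b 0) (hb₁ : b 1 ≤ b 2) (hb₂ : b 2 ≤ b 3) :
    b 0 = 0 ∧ b 1 = b 3 - 3 ∧ (b 2 = b 3 - 1 ∨ b 2 = b 3 - 2) ∨
      b 0 = 1 ∧ b 1 = b 3 - 2 ∧ b 2 = b 3 - 1 := by
  have hnorm : l1Norm (-b 2 • ![0, 1, 1, 1] + (1 : ℤ) • b) = b 0 + (b 3 - b 1) := by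
    have h1 : |-b 2 + b 1| = b 2 - b 1 := by rw [abs_of_nonpos (by linarith)]; ring
    have h3 : |-b 2 + b 3| = b 3 - b 2 := by rw [abs_of_nonneg (by linarith)]; ring
    simp only [l1Norm, Fin.sum_univ_four, Pi.add_apply, Pi.smul_apply, smul_eq_mul,
      Matrix.cons_val, mul_zero, zero_add, mul_one, one_mul, neg_add_cancel, abs_zero,
      abs_of_nonneg hb₀, h1, h3]
    ring
  have hs := h.shortest (-b 2) 1 (Or.inr one_ne_zero)
  have hp := h.abs_apply_lt (-b 2) 1 (Or.inr one_ne_zero)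
  simp only [hnorm, h.l1Norm_eq_three] at hs hp
  have hp₀ := (le_abs_self _).trans_lt (hp 0)
  have hp₁ := (neg_le_abs _).trans_lt (hp 1)
  have hp₃ := (le_abs_self _).trans_lt (hp 3)
  obtain ⟨k, hk⟩ := h.exists_int_dotProduct_bounds
  -- Two opposite vertices of the slice `r · e = 2` of the cube.
  have hv₁ := hk 1 ![1, 0, 1, 1] one_pos (by decide) (by decide)
  have hv₂ := hk 1 ![-1, 1, 1, 0] one_pos (by decide) (by decide)
  simp only [dotProduct, Fin.sum_univ_four, Pi.add_apply, Pi.smul_apply, smul_eq_mul,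
    Matrix.cons_val] at hp₀ hp₁ hp₃ hv₁ hv₂
  omega

lemma IsExtremalPair.left_eq_of_monotone {r b : Fin 4 → ℤ} (h : IsExtremalPair r b)
    (hmono : Monotone r) (hnonneg : ∀ i, 0 ≤ r i) :
    r = ![0, 0, 1, 2] ∨ r = ![0, 1, 1, 1] := by
  have hN := h.l1Norm_eq_three
  have hlt := h.abs_left_apply_lt 3
  have h01 : r 0 ≤ r 1 := hmono (by decide)
  have h12 : r 1 ≤ r 2 := hmono (by decide)
  have h23 : r 2 ≤ r 3 := hmono (by decide)
  simp only [hN, abs_of_nonneg (hnonneg _)] at hlt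
  simp only [l1Norm, Fin.sum_univ_four, abs_of_nonneg (hnonneg _)] at hN
  have h0 := hnonneg 0
  have hcases : (r 0 = 0 ∧ r 1 = 0 ∧ r 2 = 1 ∧ r 3 = 2) ∨
      (r 0 = 0 ∧ r 1 = 1 ∧ r 2 = 1 ∧ r 3 = 1) := by omega
  refine hcases.imp ?_ ?_ <;>
  · rintro ⟨h0, h1, h2, h3⟩
    ext i
    fin_cases i <;> assumption

end FourCoordinates

section Distance

variable {n : ℕ}

lemma iSup_dist_lt_iff {f g : Torus n} {d : ℝ} (hd : 0 < d) :
    ⨆ i, dist (f i) (g i) < d ↔ ∀ i, dist (f i) (g i) < d := by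
  refine ⟨fun h i => (le_ciSup (Set.finite_range _).bddAbove i).trans_lt h, fun h => ?_⟩
  rcases isEmpty_or_nonempty (Fin n) with hn | hn
  · rwa [Real.iSup_of_isEmpty]
  · obtain ⟨i, hi⟩ := exists_eq_ciSup_of_finite (f := fun i => dist (f i) (g i))
    exact hi ▸ h i

lemma DVal_lt_iff {S : Set (Torus n)} (hS : S.Nonempty) {d : ℝ} (hd : 0 < d) :
    DVal S < d ↔ ∃ p ∈ S, ∀ i, dist (p i) ((1 / 2 : ℝ) : AddCircle (1 : ℝ)) < d := by
  have hbdd : BddBelow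
      ((fun x : Torus n => ⨆ i, dist (x i) ((1 / 2 : ℝ) : AddCircle (1 : ℝ))) '' S) :=
    ⟨0, Set.forall_mem_image.2 fun p _ => Real.iSup_nonneg fun i => dist_nonneg⟩
  rw [DVal, csInf_lt_iff hbdd (hS.image _), Set.exists_mem_image]
  simp only [iSup_dist_lt_iff (g := fun _ => ((1 / 2 : ℝ) : AddCircle (1 : ℝ))) hd]

lemma dist_coe_coe_lt_iff {a c d : ℝ} :
    dist (a : AddCircle (1 : ℝ)) c < d ↔ ∃ m : ℤ, |a - c - m| < d := by
  rw [dist_eq_norm, ← AddCircle.coe_sub, UnitAddCircle.norm_eq]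
  exact ⟨fun h => ⟨_, h⟩, fun ⟨m, hm⟩ => (round_le _ m).trans_lt hm⟩

/-- The image in the torus of the solutions of `r · x = b · x = 0`. -/
def relTorus (r b : Fin n → ℤ) : Set (Torus n) :=
  torusProj '' {x | realVec r ⬝ᵥ x = 0 ∧ realVec b ⬝ᵥ x = 0}

lemma relTorus_nonempty (r b : Fin n → ℤ) : (relTorus r b).Nonempty :=
  ⟨_, 0, ⟨dotProduct_zero _, dotProduct_zero _⟩, rfl⟩

/-- `r` and `b` are part of a `ℤ`-basis of the integer vectors; equivalently their values on
integer vectors can be prescribed, which is the form used here. -/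
def IsPrimitivePair (r b : ι → ℤ) : Prop :=
  ∀ k l : ℤ, ∃ z : ι → ℤ, r ⬝ᵥ z = k ∧ b ⬝ᵥ z = l

/-- The coordinates `4 (x - m - 1/2)` used in `MeetsOpenCube`, for a point `x` translated by the
integer vector `m`. -/
def cubeCoord (x : ι → ℝ) (m : ι → ℤ) : ι → ℝ := fun i => 4 * (x i - 1 / 2 - m i)

lemma norm_cubeCoord_lt_one_iff (x : ι → ℝ) (m : ι → ℤ) :
    ‖cubeCoord x m‖ < 1 ↔ ∀ i, |x i - 1 / 2 - m i| < 1 / 4 := by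
  rw [pi_norm_lt_iff one_pos]
  refine forall_congr' fun i => ?_
  rw [cubeCoord, norm_mul, Real.norm_eq_abs, Real.norm_eq_abs, Nat.abs_ofNat, lt_div_iff₀' four_pos]

lemma realVec_dotProduct_cubeCoord (c : ι → ℤ) (x : ι → ℝ) (m : ι → ℤ) :
    realVec c ⬝ᵥ cubeCoord x m = 4 * (realVec c ⬝ᵥ x - (c ⬝ᵥ m : ℤ)) - 2 * ↑(∑ i, c i) := by
  simp only [dotProduct, realVec, cubeCoord, Int.cast_sum, Int.cast_mul, Finset.mul_sum,
    ← Finset.sum_sub_distrib]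
  exact Finset.sum_congr rfl fun i _ => by ring

lemma DVal_relTorus_lt_iff {r b : Fin n → ℤ} (hrb : IsPrimitivePair r b) :
    DVal (relTorus r b) < 1 / 4 ↔ MeetsOpenCube r b := by
  rw [DVal_lt_iff (relTorus_nonempty r b) (by norm_num), relTorus, Set.exists_mem_image]
  simp only [torusProj, dist_coe_coe_lt_iff]
  constructor
  · rintro ⟨x, ⟨hr, hb⟩, hx⟩
    choose m hm using hx
    have hdot (c : Fin n → ℤ) (hc : realVec c ⬝ᵥ x = 0) :
        realVec c ⬝ᵥ cubeCoord x m = 4 * ↑(-∑ i, c i - c ⬝ᵥ m) + 2 * ↑(∑ i, c i) := by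
      rw [realVec_dotProduct_cubeCoord, hc]
      push_cast
      ring
    exact ⟨_, (norm_cubeCoord_lt_one_iff x m).2 hm, ⟨_, hdot r hr⟩, _, hdot b hb⟩
  · rintro ⟨e, he, ⟨k, hk⟩, l, hl⟩
    obtain ⟨m, hrm, hbm⟩ := hrb (-k - ∑ i, r i) (-l - ∑ i, b i)
    obtain ⟨x, rfl⟩ : ∃ x, e = cubeCoord x m :=
      ⟨fun i => e i / 4 + 1 / 2 + m i, funext fun i => by simp only [cubeCoord]; ring⟩
    rw [realVec_dotProduct_cubeCoord, hrm] at hk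
    rw [realVec_dotProduct_cubeCoord, hbm] at hl
    push_cast at hk hl
    exact ⟨x, ⟨by linarith, by linarith⟩, fun i => ⟨m i, (norm_cubeCoord_lt_one_iff x m).1 he i⟩⟩

end Distance

section Relations

lemma exists_dotProduct_surjective_of_linearIndependent {v : κ → ι → ℤ}
    (hv : LinearIndependent ℤ v) {m : ℕ} (hm : Fintype.card κ + m = Fintype.card ι) :
    ∃ w : Fin m → ι → ℤ, (∀ j i, w j ⬝ᵥ v i = 0) ∧
      Function.Surjective fun (z : ι → ℤ) j => w j ⬝ᵥ z := by
  classical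
  obtain ⟨d, S⟩ := Submodule.smithNormalForm (Pi.basisFun ℤ ι) (Submodule.span ℤ (Set.range v))
  have hd : Fintype.card κ = d := by
    rw [← finrank_span_eq_card hv, Module.finrank_eq_card_basis S.bN, Fintype.card_fin]
  obtain ⟨f⟩ : Nonempty (Fin m ≃ {i // i ∉ Set.range S.f}) := by
    refine Fintype.card_eq.1 ?_
    rw [Fintype.card_fin, Fintype.card_subtype_compl, Set.card_range_of_injective S.f.injective,
      Fintype.card_fin]
    omega
  let w (j : Fin m) : ι → ℤ := (dotProductEquiv ℤ ι).symm (S.bM.coord (f j))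
  have hw (j : Fin m) (z : ι → ℤ) : w j ⬝ᵥ z = S.bM.coord (f j) z := by
    rw [← dotProductEquiv_apply_apply, LinearEquiv.apply_symm_apply]
  refine ⟨w, fun j i => ?_, fun c => ⟨∑ j, c j • S.bM (f j), funext fun j => ?_⟩⟩
  · rw [hw]
    exact S.repr_eq_zero_of_notMem_range ⟨v i, Submodule.subset_span ⟨i, rfl⟩⟩ (f j).2
  · have hcoord (i : Fin m) : S.bM.coord (f j) (S.bM (f i)) = if i = j then 1 else 0 := by
      rw [Module.Basis.coord_apply, Module.Basis.repr_self, Finsupp.single_apply]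
      simp only [← Subtype.ext_iff, f.injective.eq_iff]
    simp only [hw, map_sum, map_smul, hcoord, smul_eq_mul, mul_ite, mul_one, mul_zero,
      Finset.sum_ite_eq', Finset.mem_univ, if_true]

lemma mem_span_realVec_iff {l : Type*} [Fintype l] {v : κ → ι → ℤ} {w : l → ι → ℤ}
    (hv : LinearIndependent ℝ fun i => realVec (v i))
    (hcard : Fintype.card κ + Fintype.card l = Fintype.card ι) (hwv : ∀ j i, w j ⬝ᵥ v i = 0)
    (hw : Function.Surjective fun (z : ι → ℤ) j => w j ⬝ᵥ z) (x : ι → ℝ) :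
    x ∈ Submodule.span ℝ (Set.range fun i => realVec (v i)) ↔ ∀ j, realVec (w j) ⬝ᵥ x = 0 := by
  classical
  let A : Matrix l ι ℝ := Matrix.of fun j => realVec (w j)
  have hA (z : ι → ℤ) (j : l) : (A *ᵥ realVec z) j = (w j ⬝ᵥ z : ℤ) := by
    simp [A, Matrix.mulVec, dotProduct, realVec]
  have hsurj : Function.Surjective A.mulVecLin := by
    refine mulVecLin_surjective_of_forall_vecMul_ne_zero fun α hα h0 => hα (funext fun j => ?_)
    obtain ⟨z, hz⟩ := hw (Pi.single j 1)
    have hsingle : A *ᵥ realVec z = Pi.single j 1 := funext fun j' => by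
      have hj' : w j' ⬝ᵥ z = _ := congrFun hz j'
      rw [hA, hj']
      simp [Pi.single_apply]
    calc α j = α ⬝ᵥ A *ᵥ realVec z := by rw [hsingle, dotProduct_single, mul_one]
      _ = 0 := by rw [Matrix.dotProduct_mulVec, h0, zero_dotProduct]
  have hle : Submodule.span ℝ (Set.range fun i => realVec (v i)) ≤ A.mulVecLin.ker := by
    refine Submodule.span_le.2 (Set.range_subset_iff.2 fun i => funext fun j => ?_)
    simp [hA, hwv]
  have hrank : Module.finrank ℝ (Submodule.span ℝ (Set.range fun i => realVec (v i))) =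
      Module.finrank ℝ A.mulVecLin.ker := by
    have hnullity := A.mulVecLin.finrank_range_add_finrank_ker
    rw [LinearMap.range_eq_top.2 hsurj, finrank_top, Module.finrank_fintype_fun_eq_card,
      Module.finrank_fintype_fun_eq_card] at hnullity
    rw [finrank_span_eq_card hv]
    omega
  rw [Submodule.eq_of_le_of_finrank_eq hle hrank, LinearMap.mem_ker, funext_iff]
  rfl

lemma mem_spanTorus_iff {n k : ℕ} {v : Fin k → Fin n → ℤ} {p : Torus n} :
    p ∈ spanTorus v ↔
      ∃ x ∈ Submodule.span ℝ (Set.range fun j => realVec (v j)), torusProj x = p := by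
  have hcomb (t : Fin k → ℝ) : ∑ j, t j • realVec (v j) = fun i => ∑ j, t j * (v j i : ℝ) := by
    ext i
    simp [realVec]
  simp only [Submodule.mem_span_range_iff_exists_fun, hcomb, spanTorus, Set.mem_ofPred_eq]
  constructor
  · rintro ⟨t, rfl⟩
    exact ⟨_, ⟨t, rfl⟩, rfl⟩
  · rintro ⟨x, ⟨t, rfl⟩, rfl⟩
    exact ⟨t, rfl⟩

lemma spanTorus_eq_relTorus {k : ℕ} {v : Fin k → Fin (k + 2) → ℤ} {r b : Fin (k + 2) → ℤ}
    (hv : LinearIndependent ℝ fun i => realVec (v i)) (hr : ∀ i, r ⬝ᵥ v i = 0)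
    (hb : ∀ i, b ⬝ᵥ v i = 0) (hrb : IsPrimitivePair r b) : spanTorus v = relTorus r b := by
  have hsurj : Function.Surjective fun (z : Fin (k + 2) → ℤ) j => ![r, b] j ⬝ᵥ z := fun c => by
    obtain ⟨z, hrz, hbz⟩ := hrb (c 0) (c 1)
    exact ⟨z, funext (Fin.forall_fin_two.2 ⟨hrz, hbz⟩)⟩
  ext p
  simp only [mem_spanTorus_iff,
    mem_span_realVec_iff hv (by simp) (Fin.forall_fin_two.2 ⟨hr, hb⟩) hsurj, Fin.forall_fin_two]
  rfl

omit [Fintype ι] [Fintype κ] in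
lemma linearIndependent_int_of_realVec {v : κ → ι → ℤ}
    (hv : LinearIndependent ℝ fun i => realVec (v i)) : LinearIndependent ℤ v :=
  (hv.restrict_scalars' ℤ).of_comp ((Int.castAddHom ℝ).toIntLinearMap.compLeft ι)

lemma IsSubtorus.exists_eq_relTorus {k : ℕ} {U : Set (Torus (k + 2))} (hU : IsSubtorus k U) :
    ∃ r b : Fin (k + 2) → ℤ, IsPrimitivePair r b ∧ U = relTorus r b := by
  obtain ⟨v, hv, rfl⟩ := hU
  obtain ⟨w, hwv, hw⟩ := exists_dotProduct_surjective_of_linearIndependent (m := 2)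
    (linearIndependent_int_of_realVec hv) (by simp)
  have hprim : IsPrimitivePair (w 0) (w 1) := fun a c => by
    obtain ⟨z, hz⟩ := hw ![a, c]
    exact ⟨z, congrFun hz 0, congrFun hz 1⟩
  exact ⟨w 0, w 1, hprim, spanTorus_eq_relTorus hv (hwv 0) (hwv 1) hprim⟩

end Relations

section Reduction

namespace IsPrimitivePair

lemma smul_add_smul_ne_zero {r b : ι → ℤ} (h : IsPrimitivePair r b) {x y : ℤ}
    (hxy : x ≠ 0 ∨ y ≠ 0) : x • r + y • b ≠ 0 := by
  intro h0
  have hdot (z : ι → ℤ) : x * (r ⬝ᵥ z) + y * (b ⬝ᵥ z) = 0 := by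
    rw [← smul_eq_mul, ← smul_eq_mul, ← smul_dotProduct, ← smul_dotProduct, ← add_dotProduct, h0,
      zero_dotProduct]
  obtain ⟨z, hrz, hbz⟩ := h 1 0
  obtain ⟨z', hrz', hbz'⟩ := h 0 1
  have hx := hdot z
  have hy := hdot z'
  rw [hrz, hbz] at hx
  rw [hrz', hbz'] at hy
  omega

lemma of_det_eq_one {r b : ι → ℤ} (h : IsPrimitivePair r b) {x y u v : ℤ}
    (hdet : x * v - y * u = 1) :
    IsPrimitivePair (x • r + y • b) (u • r + v • b) := fun k l => by
  obtain ⟨z, hrz, hbz⟩ := h (v * k - y * l) (x * l - u * k)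
  refine ⟨z, ?_, ?_⟩ <;>
    simp only [add_dotProduct, smul_dotProduct, hrz, hbz, smul_eq_mul]
  · linear_combination k * hdet
  · linear_combination l * hdet

end IsPrimitivePair

lemma relTorus_eq_of_isUnit_det {n : ℕ} (r b : Fin n → ℤ) {x y u v : ℤ}
    (hdet : IsUnit (x * v - y * u)) :
    relTorus (x • r + y • b) (u • r + v • b) = relTorus r b := by
  have hsq : ((x * v - y * u) * (x * v - y * u) : ℝ) = 1 := by
    exact_mod_cast Int.isUnit_mul_self hdet
  refine congrArg (torusProj '' ·) (Set.ext fun z => ?_)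
  simp only [Set.mem_ofPred_eq, realVec_add_smul, add_dotProduct, smul_dotProduct, smul_eq_mul]
  constructor
  · rintro ⟨h₁, h₂⟩
    constructor
    · linear_combination (x * v - y * u) * (v * h₁ - y * h₂) - (realVec r ⬝ᵥ z) * hsq
    · linear_combination (x * v - y * u) * (x * h₂ - u * h₁) - (realVec b ⬝ᵥ z) * hsq
  · rintro ⟨h₁, h₂⟩
    simp [h₁, h₂]

lemma IsPrimitivePair.exists_shortest {n : ℕ} {r b : Fin n → ℤ} (h : IsPrimitivePair r b) :
    ∃ r' b' : Fin n → ℤ, IsPrimitivePair r' b' ∧ relTorus r' b' = relTorus r b ∧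
      ∀ x y : ℤ, (x ≠ 0 ∨ y ≠ 0) → l1Norm r' ≤ l1Norm (x • r' + y • b') := by
  let P : Set ((Fin n → ℤ) × (Fin n → ℤ)) :=
    {q | IsPrimitivePair q.1 q.2 ∧ relTorus q.1 q.2 = relTorus r b}
  obtain ⟨⟨r', b'⟩, ⟨hprim, hrel⟩, hmin⟩ :=
    WellFounded.has_min (measure fun q : (Fin n → ℤ) × (Fin n → ℤ) => (l1Norm q.1).toNat).wf P
      ⟨(r, b), h, rfl⟩
  refine ⟨r', b', hprim, hrel, fun x y hxy => ?_⟩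
  obtain ⟨g, x, y, hg, hcop, rfl, rfl⟩ := Int.exists_gcd_one' (Int.gcd_pos_iff.2 hxy)
  obtain ⟨u, v, huv⟩ := Int.isCoprime_iff_gcd_eq_one.2 hcop
  have hdet : x * u - y * (-v) = 1 := by linear_combination huv
  have hle : l1Norm r' ≤ l1Norm (x • r' + y • b') := by
    have hnot : ¬ (l1Norm (x • r' + y • b')).toNat < (l1Norm r').toNat :=
      hmin (x • r' + y • b', -v • r' + u • b') ⟨hprim.of_det_eq_one hdet,
        (relTorus_eq_of_isUnit_det r' b' (hdet ▸ isUnit_one)).trans hrel⟩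
    have hnonneg := l1Norm_nonneg (x • r' + y • b')
    omega
  have hscale : (x * g) • r' + (y * g) • b' = (g : ℤ) • (x • r' + y • b') := by module
  rw [hscale, l1Norm_smul, Nat.abs_cast]
  exact hle.trans (le_mul_of_one_le_left (l1Norm_nonneg _) (by exact_mod_cast hg))

lemma eq_zero_of_l1Norm_le_abs_apply {c : ι → ℤ} {i j : ι} (h : l1Norm c ≤ |c i|) (hij : j ≠ i) :
    c j = 0 := by
  classical
  have hpair : |c j| + |c i| ≤ l1Norm c := by
    rw [← Finset.sum_pair (f := fun i => |c i|) hij]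
    exact Finset.sum_le_univ_sum_of_nonneg fun _ => abs_nonneg _
  exact abs_nonpos_iff.1 (by linarith)

lemma IsProperSub.abs_apply_lt_l1Norm {n : ℕ} {U : Set (Torus n)} (hU : IsProperSub U)
    {c : Fin n → ℤ} (hc : c ≠ 0) (hcU : U ⊆ torusProj '' {x | realVec c ⬝ᵥ x = 0}) (i : Fin n) :
    |c i| < l1Norm c := by
  by_contra! hle
  have hzero (j : Fin n) (hij : j ≠ i) : c j = 0 := eq_zero_of_l1Norm_le_abs_apply hle hij
  have hci : (c i : ℝ) ≠ 0 := fun h0 => hc <| funext fun j => by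
    by_cases hij : j = i
    · exact_mod_cast hij ▸ h0
    · exact hzero j hij
  refine hU fun p hp => Set.mem_iUnion.2 ⟨i, ?_⟩
  obtain ⟨x, hx, rfl⟩ := hcU hp
  have hdot : realVec c ⬝ᵥ x = c i * x i :=
    Finset.sum_eq_single i (fun j _ hij => by simp [realVec, hzero j hij]) (by simp)
  have hxi : x i = 0 := (mul_eq_zero.1 (hdot.symm.trans hx)).resolve_left hci
  simp [torusProj, hxi]

lemma IsSubtorus.exists_isExtremalPair {k : ℕ} {U : Set (Torus (k + 2))} (hU : IsSubtorus k U)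
    (hproper : IsProperSub U) (hD : 1 / 4 ≤ DVal U) :
    ∃ r b : Fin (k + 2) → ℤ, IsExtremalPair r b ∧ U = relTorus r b := by
  obtain ⟨r₀, b₀, hprim₀, rfl⟩ := hU.exists_eq_relTorus
  obtain ⟨r, b, hprim, hrel, hshort⟩ := hprim₀.exists_shortest
  rw [← hrel] at hproper hD
  refine ⟨r, b, ⟨hshort, fun x y hxy => ?_, ?_⟩, hrel.symm⟩
  · refine hproper.abs_apply_lt_l1Norm (hprim.smul_add_smul_ne_zero hxy) ?_
    refine Set.image_mono fun z hz => ?_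
    rw [Set.mem_ofPred_eq, realVec_add_smul, add_dotProduct, smul_dotProduct, smul_dotProduct,
      hz.1, hz.2, smul_zero, smul_zero, add_zero]
  · rwa [← DVal_relTorus_lt_iff hprim, not_lt]

end Reduction

section ModelTori

lemma realVec_dotProduct_eq_two_or_eq_neg_two {c : ι → ℤ} (hc : l1Norm c = 3) {e : ι → ℝ}
    (he : ‖e‖ < 1) (h : ∃ k : ℤ, realVec c ⬝ᵥ e = 4 * k + 2 * ↑(∑ i, c i)) :
    realVec c ⬝ᵥ e = 2 ∨ realVec c ⬝ᵥ e = -2 := by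
  have hlt : |realVec c ⬝ᵥ e| < 3 := by
    calc |realVec c ⬝ᵥ e| ≤ ∑ i, |realVec c i * e i| := Finset.abs_sum_le_sum_abs _ _
      _ ≤ ∑ i, |realVec c i| * ‖e‖ := Finset.sum_le_sum fun i _ => by
        rw [abs_mul]
        exact mul_le_mul_of_nonneg_left (norm_le_pi_norm e i) (abs_nonneg _)
      _ = 3 * ‖e‖ := by
        have hc' : ∑ i, |realVec c i| = 3 := (l1Norm_realVec c).trans (by simp [hc])
        rw [← Finset.sum_mul, hc']
      _ < 3 := by linarith
  obtain ⟨k, hk⟩ := h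
  obtain ⟨m, hm⟩ := hc ▸ even_l1Norm_sub_sum c
  have hk' : realVec c ⬝ᵥ e = 2 * ((2 * k + 3 - 2 * m : ℤ) : ℝ) := by
    rw [hk, (by linarith : ∑ i, c i = 3 - (m + m))]
    push_cast
    ring
  rw [hk', abs_lt] at hlt
  have hlow : -2 < 2 * k + 3 - 2 * m := by
    have : (-2 : ℝ) < (2 * k + 3 - 2 * m : ℤ) := by linarith
    exact_mod_cast this
  have hhigh : 2 * k + 3 - 2 * m < 2 := by
    have : ((2 * k + 3 - 2 * m : ℤ) : ℝ) < 2 := by linarith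
    exact_mod_cast this
  rw [hk']
  obtain hq | hq : 2 * k + 3 - 2 * m = 1 ∨ 2 * k + 3 - 2 * m = -1 := by omega
  all_goals simp [hq]

lemma isProperSub_of_torusProj_mem {n : ℕ} {S : Set (Torus n)} {x : Fin n → ℝ}
    (hS : torusProj x ∈ S) (hx : ∀ i, x i ∈ Set.Ioo 0 1) : IsProperSub S := by
  intro hsub
  obtain ⟨i, hi⟩ := Set.mem_iUnion.1 (hsub hS)
  obtain ⟨m, hm⟩ := (AddCircle.coe_eq_zero_iff 1).1 hi
  have hmem := hx i
  rw [← hm, zsmul_eq_mul, mul_one] at hmem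
  have hpos : 0 < m := by exact_mod_cast hmem.1
  have hlt : m < 1 := by exact_mod_cast hmem.2
  omega

lemma DVal_le_of_torusProj_mem {n : ℕ} {S : Set (Torus n)} {x : Fin n → ℝ} (hS : torusProj x ∈ S)
    {d : ℝ} (hd : 0 ≤ d) (hx : ∀ i, |x i - 1 / 2| ≤ d) : DVal S ≤ d := by
  refine le_of_forall_gt fun d' hd' => ?_
  refine (DVal_lt_iff ⟨_, hS⟩ (hd.trans_lt hd')).2 ⟨_, hS, fun i => ?_⟩
  exact dist_coe_coe_lt_iff.2 ⟨0, by simpa using (hx i).trans_lt hd'⟩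

lemma IsPrimitivePair.isProperSub_and_DVal_eq {n : ℕ} {r b : Fin n → ℤ}
    (hrb : IsPrimitivePair r b) (hcube : ¬ MeetsOpenCube r b) {x : Fin n → ℝ}
    (hr : realVec r ⬝ᵥ x = 0) (hb : realVec b ⬝ᵥ x = 0) (hx : ∀ i, |x i - 1 / 2| ≤ 1 / 4) :
    IsProperSub (relTorus r b) ∧ DVal (relTorus r b) = 1 / 4 := by
  have hmem : torusProj x ∈ relTorus r b := ⟨x, ⟨hr, hb⟩, rfl⟩
  refine ⟨isProperSub_of_torusProj_mem hmem fun i => ?_, le_antisymm ?_ ?_⟩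
  · have hi := abs_le.1 (hx i)
    constructor <;> linarith
  · exact DVal_le_of_torusProj_mem hmem (by norm_num) hx
  · exact not_lt.1 ((DVal_relTorus_lt_iff hrb).not.2 hcube)

lemma isPrimitivePair_U1 : IsPrimitivePair ![0, 2, -1, 0] ![0, 1, 1, -1] := fun k l =>
  ⟨![0, 0, -k, -k - l], by simp [dotProduct, Fin.sum_univ_four],
    by simp [dotProduct, Fin.sum_univ_four]⟩

lemma isPrimitivePair_U2 : IsPrimitivePair ![1, -1, -1, 0] ![1, 1, 0, -1] := fun k l =>
  ⟨![k, 0, 0, k - l], by simp [dotProduct, Fin.sum_univ_four],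
    by simp [dotProduct, Fin.sum_univ_four]⟩

lemma not_meetsOpenCube_U1 : ¬ MeetsOpenCube ![0, 2, -1, 0] ![0, 1, 1, -1] := by
  rintro ⟨e, he, hr, hb⟩
  have h (i : Fin 4) := abs_lt.1 ((pi_norm_lt_iff one_pos).1 he i)
  have h₁ := h 1
  have h₂ := h 2
  have h₃ := h 3
  have hr := realVec_dotProduct_eq_two_or_eq_neg_two (by decide) he hr
  have hb := realVec_dotProduct_eq_two_or_eq_neg_two (by decide) he hb
  simp only [dotProduct, realVec, Fin.sum_univ_four, Matrix.cons_val] at hr hb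
  push_cast at hr hb
  rcases hr with hr | hr <;> rcases hb with hb | hb <;> linarith

lemma not_meetsOpenCube_U2 : ¬ MeetsOpenCube ![1, -1, -1, 0] ![1, 1, 0, -1] := by
  rintro ⟨e, he, hr, hb⟩
  have h (i : Fin 4) := abs_lt.1 ((pi_norm_lt_iff one_pos).1 he i)
  have h₀ := h 0
  have h₁ := h 1
  have h₂ := h 2
  have h₃ := h 3
  have hr := realVec_dotProduct_eq_two_or_eq_neg_two (by decide) he hr
  have hb := realVec_dotProduct_eq_two_or_eq_neg_two (by decide) he hb
  simp only [dotProduct, realVec, Fin.sum_univ_four, Matrix.cons_val] at hr hb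
  push_cast at hr hb
  rcases hr with hr | hr <;> rcases hb with hb | hb <;> linarith

lemma linearIndependent_U1 : LinearIndependent ℝ fun j =>
    realVec ((![![0, 1, 2, 3], ![1, 0, 0, 0]] : Fin 2 → Fin 4 → ℤ) j) := by
  refine Fintype.linearIndependent_iff.2 fun g hg => ?_
  refine Fin.forall_fin_two.2 ⟨?_, ?_⟩
  · simpa [realVec] using congrFun hg 1
  · simpa [realVec] using congrFun hg 0

lemma linearIndependent_U2 : LinearIndependent ℝ fun j =>
    realVec ((![![1, 0, 1, 1], ![1, 1, 0, 2]] : Fin 2 → Fin 4 → ℤ) j) := by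
  refine Fintype.linearIndependent_iff.2 fun g hg => ?_
  refine Fin.forall_fin_two.2 ⟨?_, ?_⟩
  · simpa [realVec] using congrFun hg 2
  · simpa [realVec] using congrFun hg 1

lemma U1_eq_relTorus : U1 = relTorus ![0, 2, -1, 0] ![0, 1, 1, -1] :=
  spanTorus_eq_relTorus linearIndependent_U1 (by decide) (by decide) isPrimitivePair_U1

lemma U2_eq_relTorus : U2 = relTorus ![1, -1, -1, 0] ![1, 1, 0, -1] :=
  spanTorus_eq_relTorus linearIndependent_U2 (by decide) (by decide) isPrimitivePair_U2

lemma isSubtorus_isProperSub_DVal_U1 : IsSubtorus 2 U1 ∧ IsProperSub U1 ∧ DVal U1 = 1 / 4 := by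
  refine ⟨⟨_, linearIndependent_U1, rfl⟩, ?_⟩
  rw [U1_eq_relTorus]
  refine isPrimitivePair_U1.isProperSub_and_DVal_eq not_meetsOpenCube_U1
    (x := ![1 / 2, 1 / 4, 1 / 2, 3 / 4]) ?_ ?_ fun i => ?_
  · simp only [dotProduct, realVec, Fin.sum_univ_four, Matrix.cons_val]
    norm_num
  · simp only [dotProduct, realVec, Fin.sum_univ_four, Matrix.cons_val]
    norm_num
  · fin_cases i <;> norm_num [abs_le]

lemma isSubtorus_isProperSub_DVal_U2 : IsSubtorus 2 U2 ∧ IsProperSub U2 ∧ DVal U2 = 1 / 4 := by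
  refine ⟨⟨_, linearIndependent_U2, rfl⟩, ?_⟩
  rw [U2_eq_relTorus]
  refine isPrimitivePair_U2.isProperSub_and_DVal_eq not_meetsOpenCube_U2
    (x := ![1 / 2, 1 / 4, 1 / 4, 3 / 4]) ?_ ?_ fun i => ?_
  · simp only [dotProduct, realVec, Fin.sum_univ_four, Matrix.cons_val]
    norm_num
  · simp only [dotProduct, realVec, Fin.sum_univ_four, Matrix.cons_val]
    norm_num
  · fin_cases i <;> norm_num [abs_le]

end ModelTori

section Classification

variable {n : ℕ}

lemma signedPerm_signedPerm (π π' : Equiv.Perm (Fin n)) (ε ε' : Fin n → Bool) (p : Torus n) :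
    signedPerm π ε (signedPerm π' ε' p) =
      signedPerm (π' * π) (fun i => xor (ε i) (ε' (π i))) p :=
  signedPermVec_signedPermVec π π' ε ε' p

lemma signedPerm_torusProj (π : Equiv.Perm (Fin n)) (ε : Fin n → Bool) (x : Fin n → ℝ) :
    signedPerm π ε (torusProj x) = torusProj (signedPermVec π ε x) := by
  ext i
  by_cases hi : ε i <;> simp [signedPerm, signedPermVec, torusProj, hi]

lemma signedPerm_image_relTorus (π : Equiv.Perm (Fin n)) (ε : Fin n → Bool) (r b : Fin n → ℤ) :
    signedPerm π ε '' relTorus r b = relTorus (signedPermVec π ε r) (signedPermVec π ε b) := by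
  ext p
  simp only [relTorus, Set.image_image, signedPerm_torusProj]
  constructor
  · rintro ⟨x, hx, rfl⟩
    refine ⟨_, ?_, rfl⟩
    simpa only [Set.mem_ofPred_eq, realVec_signedPermVec, signedPermVec_dotProduct_signedPermVec]
  · rintro ⟨y, hy, rfl⟩
    obtain ⟨x, rfl⟩ := signedPermVec_surjective π ε y
    refine ⟨x, ?_, rfl⟩
    simpa only [Set.mem_ofPred_eq, realVec_signedPermVec, signedPermVec_dotProduct_signedPermVec]
      using hy

lemma signedPerm_image_relTorus_eq {π : Equiv.Perm (Fin n)} {ε : Fin n → Bool}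
    {r b r' b' : Fin n → ℤ} (x y u v : ℤ) (hdet : IsUnit (x * v - y * u))
    (hr : r' = x • signedPermVec π ε r + y • signedPermVec π ε b)
    (hb : b' = u • signedPermVec π ε r + v • signedPermVec π ε b) :
    signedPerm π ε '' relTorus r b = relTorus r' b' := by
  rw [signedPerm_image_relTorus, hr, hb, relTorus_eq_of_isUnit_det _ _ hdet]

lemma exists_signedPerm_image_relTorus_0012_eq_U1 (c : ℤ) {d : ℤ}
    (hd : d = 2 * c + 3 ∨ d = 2 * c - 3) :
    ∃ (π : Equiv.Perm (Fin 4)) (ε : Fin 4 → Bool),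
      signedPerm π ε '' relTorus ![0, 0, 1, 2] ![0, 1, c, d] = U1 := by
  rw [U1_eq_relTorus]
  rcases hd with rfl | rfl
  · refine ⟨Equiv.swap 1 3, ![false, false, true, true],
      signedPerm_image_relTorus_eq 1 0 (-(c + 1)) 1 (by simp) ?_ ?_⟩ <;>
    · ext i
      fin_cases i <;> simp [signedPermVec, Equiv.swap_apply_def] <;> ring
  · refine ⟨Equiv.swap 1 3, ![false, false, true, false],
      signedPerm_image_relTorus_eq 1 0 (c - 1) (-1) (by simp) ?_ ?_⟩ <;>
    · ext i
      fin_cases i <;> simp [signedPermVec, Equiv.swap_apply_def] <;> ring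

lemma exists_signedPerm_image_relTorus_0111_eq_U1 (t : ℤ) {s : ℤ} (hs : s = t - 1 ∨ s = t - 2) :
    ∃ (π : Equiv.Perm (Fin 4)) (ε : Fin 4 → Bool),
      signedPerm π ε '' relTorus ![0, 1, 1, 1] ![0, t - 3, s, t] = U1 := by
  rw [U1_eq_relTorus]
  rcases hs with rfl | rfl
  · refine ⟨Equiv.swap 2 3, ![false, false, false, true],
      signedPerm_image_relTorus_eq (t - 1) (-1) 1 0 (by simp) ?_ ?_⟩ <;>
    · ext i
      fin_cases i <;> simp [signedPermVec, Equiv.swap_apply_def] <;> ring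
  · refine ⟨Equiv.swap 1 2 * Equiv.swap 1 3, ![false, false, false, true],
      signedPerm_image_relTorus_eq (-(t - 2)) 1 1 0 (by simp) ?_ ?_⟩ <;>
    · ext i
      fin_cases i <;> simp [signedPermVec, Equiv.swap_apply_def]

lemma exists_signedPerm_image_relTorus_0111_eq_U2 (t : ℤ) :
    ∃ (π : Equiv.Perm (Fin 4)) (ε : Fin 4 → Bool),
      signedPerm π ε '' relTorus ![0, 1, 1, 1] ![1, t - 2, t - 1, t] = U2 := by
  rw [U2_eq_relTorus]
  refine ⟨Equiv.swap 0 3, ![true, false, false, false],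
    signedPerm_image_relTorus_eq (-1) 0 (t - 1) (-1) (by simp) ?_ ?_⟩ <;>
  · ext i
    fin_cases i <;> simp [signedPermVec, Equiv.swap_apply_def]

lemma IsExtremalPair.exists_signedPerm_image_eq_of_monotone {r b : Fin 4 → ℤ}
    (h : IsExtremalPair r b) (hmono : Monotone fun i => toLex (r i, b i))
    (hnonneg : ∀ i, 0 ≤ toLex (r i, b i)) :
    ∃ (π : Equiv.Perm (Fin 4)) (ε : Fin 4 → Bool),
      signedPerm π ε '' relTorus r b = U1 ∨ signedPerm π ε '' relTorus r b = U2 := by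
  have hb_le {i j : Fin 4} (hij : i ≤ j) (hr : r i = r j) : b i ≤ b j :=
    ((Prod.Lex.toLex_le_toLex.1 (hmono hij)).resolve_left hr.not_lt).2
  have hb_nonneg {i : Fin 4} (hr : r i = 0) : 0 ≤ b i :=
    ((Prod.Lex.toLex_le_toLex.1 (hnonneg i)).resolve_left hr.not_gt).2
  have hvec : b = ![b 0, b 1, b 2, b 3] := by
    ext i
    fin_cases i <;> rfl
  rcases h.left_eq_of_monotone (Prod.Lex.monotone_fst_ofLex.comp hmono)
    (fun i => Prod.Lex.monotone_fst_ofLex (hnonneg i)) with rfl | rfl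
  · obtain ⟨h0, h1, h3⟩ := h.right_of_left_eq_0012 (hb_nonneg rfl) (hb_le (by decide) rfl)
    rw [hvec, h0, h1]
    obtain ⟨π, ε, hσ⟩ := exists_signedPerm_image_relTorus_0012_eq_U1 (b 2) h3
    exact ⟨π, ε, Or.inl hσ⟩
  · rcases h.right_of_left_eq_0111 (hb_nonneg rfl) (hb_le (by decide) rfl)
      (hb_le (by decide) rfl) with ⟨h0, h1, h2⟩ | ⟨h0, h1, h2⟩
    · rw [hvec, h0, h1]
      obtain ⟨π, ε, hσ⟩ := exists_signedPerm_image_relTorus_0111_eq_U1 (b 3) h2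
      exact ⟨π, ε, Or.inl hσ⟩
    · rw [hvec, h0, h1, h2]
      obtain ⟨π, ε, hσ⟩ := exists_signedPerm_image_relTorus_0111_eq_U2 (b 3)
      exact ⟨π, ε, Or.inr hσ⟩

lemma IsExtremalPair.exists_signedPerm_image_eq {r b : Fin 4 → ℤ} (h : IsExtremalPair r b) :
    ∃ (π : Equiv.Perm (Fin 4)) (ε : Fin 4 → Bool),
      signedPerm π ε '' relTorus r b = U1 ∨ signedPerm π ε '' relTorus r b = U2 := by
  obtain ⟨π', ε', hmono, hnonneg⟩ := exists_monotone_toLex_signedPermVec r b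
  obtain ⟨π, ε, hσ⟩ := h.signedPermVec.exists_signedPerm_image_eq_of_monotone hmono hnonneg
  refine ⟨π' * π, fun i => xor (ε i) (ε' (π i)), ?_⟩
  simpa only [← signedPerm_image_relTorus, Set.image_image, signedPerm_signedPerm] using hσ

end Classification

end

theorem stmt14_general (U : Set (Torus 4)) (hU : IsSubtorus 2 U) (hUproper : IsProperSub U)
    (hD : 1 / 4 ≤ DVal U) :
    (∃ (π : Equiv.Perm (Fin 4)) (ε : Fin 4 → Bool),
      signedPerm π ε '' U = U1 ∨ signedPerm π ε '' U = U2) ∧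
    (IsSubtorus 2 U1 ∧ IsProperSub U1 ∧ DVal U1 = 1 / 4) ∧
    (IsSubtorus 2 U2 ∧ IsProperSub U2 ∧ DVal U2 = 1 / 4) := by
  obtain ⟨r, b, hrb, rfl⟩ := hU.exists_isExtremalPair hUproper hD
  exact ⟨hrb.exists_signedPerm_image_eq, isSubtorus_isProperSub_DVal_U1,
    isSubtorus_isProperSub_DVal_U2⟩

/-- Classification of the 2-dimensional proper subtori `U ⊆ (ℝ/ℤ)⁴` with `D(U) = 1/4`. -/
theorem stmt14 (U : Set (Torus 4)) (hU : IsSubtorus 2 U) (hUproper : IsProperSub U)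
    (hD : DVal U = 1/4) :
    (∃ (π : Equiv.Perm (Fin 4)) (ε : Fin 4 → Bool),
      signedPerm π ε '' U = U1 ∨ signedPerm π ε '' U = U2) ∧
    (IsSubtorus 2 U1 ∧ IsProperSub U1 ∧ DVal U1 = 1/4) ∧
    (IsSubtorus 2 U2 ∧ IsProperSub U2 ∧ DVal U2 = 1/4) :=
  stmt14_general U hU hUproper hD.ge
end
end

section
/- Let U¹ := ⟨(0,1,2,3),(1,0,0,0)⟩_ℝ ⊆ (ℝ/ℤ)⁴. Then the set 𝒮₁(U¹) has finite symmetric difference with the set { 1/4 + 1/(4(4s + 5)) : s ∈ ℤ, s ≥ 0 }. -/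
noncomputable section

/-! For speeds `v` let `ML v` be the largest `ρ` such that, at some time `t`, every `t * v i` is at
distance at least `ρ` from `ℤ`. Since `dist x (1/2) = 1/2 - ‖x‖` on the circle, the line spanned by
`v` has `D`-value `1/2 - ML v`. The proper lines in `⟨(0, 1, …, n), (1, 0, …, 0)⟩` have speeds
proportional to `(x, 1, …, n)` with `x ≠ 0` rational, and `ML ≤ 1/(n+1)` by Dirichlet's theorem.

At a time congruent to `1/(n+1)` modulo `1` the speeds `1, …, n` attain this bound. If `x` is not
an integer multiple of `n+1`, the integral part of the time can be chosen so that `x` attains it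
too. For `x = (n+1)m` the value drops to `m/((n+1)m+1)`: Dirichlet's theorem improves to say that
either some `‖jt‖` with `1 ≤ j ≤ n` is at most this value, or `‖(n+1)t‖ ≤ 1/((n+1)m+1)`, and in
the latter case `‖(n+1)mt‖ ≤ m/((n+1)m+1)`. For `n = 3` and `m = s+1` one has
`1/2 - m/(4m+1) = 1/4 + 1/(4(4s+5))`. -/

/-! ### The circle -/

lemma norm_coe_le_abs_sub_intCast (x : ℝ) (k : ℤ) : ‖(x : UnitAddCircle)‖ ≤ |x - k| := by
  rw [UnitAddCircle.norm_eq]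
  exact round_le x k

lemma dist_coe_one_half (x : UnitAddCircle) :
    dist x ((1 / 2 : ℝ) : UnitAddCircle) = 1 / 2 - ‖x‖ := by
  have norm_half : ‖((1 / 2 : ℝ) : UnitAddCircle)‖ = 1 / 2 := by
    simpa using AddCircle.norm_half_period_eq 1
  apply le_antisymm
  · obtain ⟨x, rfl⟩ := QuotientAddGroup.mk_surjective x
    change dist (x : UnitAddCircle) _ ≤ 1 / 2 - ‖(x : UnitAddCircle)‖
    rw [dist_eq_norm, ← AddCircle.coe_sub, UnitAddCircle.norm_eq (x := x)]
    have h := abs_le.1 (abs_sub_round x)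
    rcases abs_cases (x - round x) with ⟨hx, _⟩ | ⟨hx, _⟩ <;> rw [hx]
    · refine (norm_coe_le_abs_sub_intCast _ (round x)).trans ?_
      rw [abs_le]
      constructor <;> linarith
    · refine (norm_coe_le_abs_sub_intCast _ (round x - 1)).trans ?_
      rw [abs_le]
      push_cast
      constructor <;> linarith
  · calc 1 / 2 - ‖x‖ = ‖((1 / 2 : ℝ) : UnitAddCircle)‖ - ‖x‖ := by rw [norm_half]
      _ ≤ ‖((1 / 2 : ℝ) : UnitAddCircle) - x‖ := norm_sub_norm_le _ _
      _ = dist x ((1 / 2 : ℝ) : UnitAddCircle) := by rw [dist_comm, dist_eq_norm]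

lemma one_half_sub_abs_le_norm_coe (x : ℝ) (k : ℤ) :
    1 / 2 - |x - k - 1 / 2| ≤ ‖(x : UnitAddCircle)‖ := by
  have h : dist (x : UnitAddCircle) ((1 / 2 : ℝ) : UnitAddCircle) ≤ |x - 1 / 2 - k| := by
    rw [dist_eq_norm, ← AddCircle.coe_sub]
    exact norm_coe_le_abs_sub_intCast _ k
  rw [dist_coe_one_half, sub_right_comm] at h
  linarith

lemma eq_zero_of_forall_coe_mul_eq_zero {c : ℝ} (h : ∀ t : ℝ, ((t * c : ℝ) : UnitAddCircle) = 0) :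
    c = 0 := by
  by_contra hc
  have half_eq_zero := h (1 / 2 / c)
  rw [div_mul_cancel₀ _ hc] at half_eq_zero
  have norm_half := AddCircle.norm_half_period_eq 1
  rw [half_eq_zero] at norm_half
  norm_num at norm_half

lemma coe_sqrt_two_mul_intCast_ne_zero {c : ℤ} (hc : c ≠ 0) :
    ((√2 * c : ℝ) : UnitAddCircle) ≠ 0 := by
  rw [Ne, AddCircle.coe_eq_zero_iff]
  rintro ⟨k, hk⟩
  exact (irrational_sqrt_two.mul_intCast hc).ne_int k (by simpa using hk.symm)

lemma one_div_le_norm_of_nsmul_eq_zero {u : UnitAddCircle} {N : ℕ} (hN : N • u = 0) (hu : u ≠ 0) :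
    1 / (N : ℝ) ≤ ‖u‖ := by
  rcases N.eq_zero_or_pos with rfl | hpos
  · simp
  have hfin : IsOfFinAddOrder u := isOfFinAddOrder_iff_nsmul_eq_zero.2 ⟨N, hpos, hN⟩
  have horder : addOrderOf u ≤ N := Nat.le_of_dvd hpos (addOrderOf_dvd_of_nsmul_eq_zero hN)
  rw [div_le_iff₀' (by positivity)]
  calc (1 : ℝ) ≤ addOrderOf u • ‖u‖ := AddCircle.le_add_order_smul_norm_of_isOfFinAddOrder hfin hu
    _ ≤ N • ‖u‖ := nsmul_le_nsmul_left (norm_nonneg u) horder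
    _ = N * ‖u‖ := nsmul_eq_mul _ _

lemma one_div_le_norm_coe_intCast_div {N : ℕ} (hN : N ≠ 0) {c : ℤ} (hc : ¬(N : ℤ) ∣ c) :
    1 / (N : ℝ) ≤ ‖((c / N : ℝ) : UnitAddCircle)‖ := by
  have hN' : (N : ℝ) ≠ 0 := mod_cast hN
  apply one_div_le_norm_of_nsmul_eq_zero
  · rw [← AddCircle.coe_nsmul, nsmul_eq_mul, mul_div_cancel₀ _ hN', AddCircle.coe_eq_zero_iff]
    exact ⟨c, by simp⟩
  · rw [Ne, AddCircle.coe_eq_zero_iff]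
    rintro ⟨k, hk⟩
    rw [zsmul_one, eq_div_iff hN'] at hk
    exact hc ⟨k, by rw [mul_comm]; exact_mod_cast hk.symm⟩

/-! ### Diophantine approximation -/

lemma exists_int_one_half_sub_le_norm_mul_add (x : ℚ) (τ : ℝ) :
    ∃ k : ℤ, 1 / 2 - 1 / (2 * x.den) ≤ ‖((x * (τ + k) : ℝ) : UnitAddCircle)‖ := by
  obtain ⟨u, w, huw⟩ : IsCoprime x.num x.den := Rat.isCoprime_num_den x
  have hden : (0 : ℝ) < x.den := mod_cast x.den_pos
  have huw' : (u : ℝ) * x.num + w * x.den = 1 := mod_cast huw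
  set j := round (x.den / 2 - x.num * τ)
  -- Taking `k = u * j` makes `x * (τ + k)` congruent to `(x.num * τ + j) / x.den` modulo `1`.
  have residue : (x : ℝ) * (τ + (u * j : ℤ)) - (-(w * j) : ℤ) - 1 / 2 =
      -((x.den / 2 - x.num * τ - j) / x.den) := by
    rw [Rat.cast_def]
    push_cast
    field_simp
    linear_combination 2 * (j : ℝ) * huw'
  refine ⟨u * j, le_trans ?_ (one_half_sub_abs_le_norm_coe _ (-(w * j)))⟩
  rw [residue, abs_neg, abs_div, abs_of_pos hden, ← div_div]
  gcongr
  exact abs_sub_round _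

lemma exists_mem_Icc_dvd_mul_sub {p c : ℤ} {n : ℕ} (hp : IsCoprime p (n + 1 : ℕ))
    (hc : ¬((n + 1 : ℕ) : ℤ) ∣ c) : ∃ j ∈ Set.Icc 1 n, ((n + 1 : ℕ) : ℤ) ∣ j * p - c := by
  obtain ⟨u, w, huw⟩ := hp
  set N : ℤ := ((n + 1 : ℕ) : ℤ)
  have hmod_nonneg : 0 ≤ u * c % N := Int.emod_nonneg _ (by omega)
  have hmod_lt : u * c % N < N := Int.emod_lt_of_pos _ (by omega)
  have hdvd : N ∣ u * c % N * p - c :=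
    ⟨-(w * c) - u * c / N * p, by rw [Int.emod_def]; linear_combination c * huw⟩
  have hmod_ne : u * c % N ≠ 0 := fun h => hc (by simpa [h] using hdvd)
  refine ⟨(u * c % N).toNat, ⟨by omega, by omega⟩, ?_⟩
  rwa [Int.toNat_of_nonneg hmod_nonneg]

lemma exists_norm_nsmul_le_one_sub_abs_div {ξ : ℝ} {p : ℤ} {n : ℕ} (hn : 0 < n)
    (hp : IsCoprime p (n + 1 : ℕ)) (hξ : n * |(n + 1) * ξ - p| ≤ 1) :
    ∃ j ∈ Set.Icc 1 n, ‖j • (ξ : UnitAddCircle)‖ ≤ (1 - |(n + 1) * ξ - p|) / (n + 1) := by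
  set η := (n + 1) * ξ - p with hη
  obtain ⟨c, hc_abs, hcη⟩ : ∃ c : ℤ, |c| = 1 ∧ (c : ℝ) * |η| = -η := by
    rcases le_total 0 η with h | h
    · exact ⟨-1, rfl, by simp [abs_of_nonneg h]⟩
    · exact ⟨1, rfl, by simp [abs_of_nonpos h]⟩
  have hc_ndvd : ¬((n + 1 : ℕ) : ℤ) ∣ c := fun h => by
    have := Int.le_of_dvd one_pos (hc_abs ▸ (dvd_abs _ _).2 h)
    omega
  obtain ⟨j, ⟨hj1, hjn⟩, l, hl⟩ := exists_mem_Icc_dvd_mul_sub hp hc_ndvd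
  have hc_abs' : |(c : ℝ)| = 1 := mod_cast hc_abs
  have hl' : (j : ℝ) * p - c = (n + 1) * l := mod_cast hl
  have hj1' : (1 : ℝ) ≤ j := mod_cast hj1
  have hjη : j * |η| ≤ 1 := le_trans (by gcongr) hξ
  have residue : j * ξ - l = c * (1 - j * |η|) / (n + 1) := by
    rw [eq_div_iff (by positivity)]
    linear_combination hl' - j * hη + j * hcη
  refine ⟨j, ⟨hj1, hjn⟩, ?_⟩
  rw [← AddCircle.coe_nsmul, nsmul_eq_mul]
  calc ‖((j * ξ : ℝ) : UnitAddCircle)‖ ≤ |j * ξ - l| := norm_coe_le_abs_sub_intCast _ l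
    _ = (1 - j * |η|) / (n + 1) := by
      rw [residue, abs_div, abs_mul, hc_abs', one_mul, abs_of_nonneg (sub_nonneg.2 hjη),
        abs_of_pos (Nat.cast_add_one_pos n : (0 : ℝ) < n + 1)]
    _ ≤ (1 - |η|) / (n + 1) := by
      gcongr
      exact le_mul_of_one_le_left (abs_nonneg η) hj1'

lemma exists_norm_nsmul_le_or_norm_succ_nsmul_le (ξ : UnitAddCircle) {n : ℕ} (hn : 0 < n) {ρ : ℝ}
    (hρ : 1 / (n + 2) ≤ ρ) :
    (∃ j ∈ Set.Icc 1 n, ‖j • ξ‖ ≤ ρ) ∨ ‖(n + 1) • ξ‖ ≤ 1 - (n + 1) * ρ := by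
  obtain ⟨ξ, rfl⟩ := QuotientAddGroup.mk_surjective ξ
  change (∃ j ∈ Set.Icc 1 n, ‖j • (ξ : UnitAddCircle)‖ ≤ ρ) ∨
    ‖(n + 1) • (ξ : UnitAddCircle)‖ ≤ 1 - (n + 1) * ρ
  obtain ⟨q, hq, hq_den⟩ := Real.exists_rat_abs_sub_le_and_den_le ξ n.succ_pos
  have abs_den_mul_sub_num : |q.den * ξ - q.num| ≤ 1 / (n + 2) := by
    have hden : (0 : ℝ) < q.den := mod_cast q.den_pos
    calc |q.den * ξ - q.num| = q.den * |ξ - q| := by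
          rw [← abs_of_pos hden, ← abs_mul, abs_of_pos hden, mul_sub, Rat.cast_def,
            mul_div_cancel₀ _ hden.ne']
      _ ≤ q.den * (1 / ((n.succ + 1) * q.den)) := by gcongr
      _ = 1 / (n + 2) := by
          push_cast
          field_simp
          ring
  have norm_den_nsmul : ‖q.den • (ξ : UnitAddCircle)‖ ≤ |q.den * ξ - q.num| := by
    rw [← AddCircle.coe_nsmul, nsmul_eq_mul]
    exact norm_coe_le_abs_sub_intCast _ _
  rcases hq_den.lt_or_eq with hlt | heq
  · exact .inl ⟨q.den, ⟨q.den_pos, Nat.lt_succ_iff.1 hlt⟩,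
      norm_den_nsmul.trans (abs_den_mul_sub_num.trans hρ)⟩
  have hcop : IsCoprime q.num q.den := Rat.isCoprime_num_den q
  rw [heq] at hcop
  simp only [heq, Nat.succ_eq_add_one, Nat.cast_add, Nat.cast_one]
    at abs_den_mul_sub_num norm_den_nsmul
  have hη : n * |(n + 1) * ξ - q.num| ≤ 1 := by
    calc n * |(n + 1) * ξ - q.num| ≤ (n + 2) * (1 / (n + 2)) := by gcongr; linarith
      _ = 1 := mul_one_div_cancel (by positivity)
  obtain ⟨j, hj, hjξ⟩ := exists_norm_nsmul_le_one_sub_abs_div hn hcop hη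
  rcases le_or_gt ((1 - |(n + 1) * ξ - q.num|) / (n + 1)) ρ with h | h
  · exact .inl ⟨j, hj, hjξ.trans h⟩
  · rw [lt_div_iff₀' (by positivity)] at h
    exact .inr (norm_den_nsmul.trans (by linarith))

lemma exists_norm_nsmul_le_or_norm_nsmul_succ_nsmul_le (ξ : UnitAddCircle) {n m : ℕ} (hn : 0 < n)
    (hm : 0 < m) :
    (∃ j ∈ Set.Icc 1 n, ‖j • ξ‖ ≤ m / ((n + 1) * m + 1)) ∨
      ‖m • (n + 1) • ξ‖ ≤ m / ((n + 1) * m + 1) := by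
  have hm' : (1 : ℝ) ≤ m := mod_cast hm
  have hρ : 1 / ((n : ℝ) + 2) ≤ m / ((n + 1) * m + 1) := by
    rw [div_le_div_iff₀ (by positivity) (by positivity)]
    linarith
  refine (exists_norm_nsmul_le_or_norm_succ_nsmul_le ξ hn hρ).imp_right fun h => ?_
  calc ‖m • (n + 1) • ξ‖ ≤ m * ‖(n + 1) • ξ‖ := norm_nsmul_le
    _ ≤ m * (1 - (n + 1) * (m / ((n + 1) * m + 1))) := by gcongr
    _ = m / ((n + 1) * m + 1) := by
      field_simp
      ring

/-! ### Maximal loneliness -/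

/-- The maximum loneliness `ML v` of runners with speeds `v` from the lonely runner problem: the
supremum over times `t` of the least distance from the `t * v i` to `ℤ`. -/
def maxLoneliness {ι : Type*} (v : ι → ℝ) : ℝ :=
  ⨆ t : ℝ, ⨅ i, ‖((t * v i : ℝ) : UnitAddCircle)‖

section maxLoneliness

variable {ι : Type*}

lemma maxLoneliness_smul {c : ℝ} (hc : c ≠ 0) (v : ι → ℝ) :
    maxLoneliness (c • v) = maxLoneliness v :=
  (Equiv.mulRight₀ c hc).iSup_congr fun t => by simp [mul_assoc]

lemma maxLoneliness_congr_abs {v w : ι → ℝ} (h : ∀ i, |v i| = |w i|) :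
    maxLoneliness v = maxLoneliness w := by
  refine iSup_congr fun t => iInf_congr fun i => ?_
  rcases abs_eq_abs.1 (h i) with hi | hi
  · rw [hi]
  · rw [hi, mul_neg, AddCircle.coe_neg, norm_neg]

variable [Finite ι] [Nonempty ι]

lemma iInf_norm_coe_mul_le_one_half (v : ι → ℝ) (t : ℝ) :
    ⨅ i, ‖((t * v i : ℝ) : UnitAddCircle)‖ ≤ 1 / 2 :=
  ciInf_le_of_le (Set.finite_range _).bddBelow (Classical.arbitrary ι)
    (by simpa using AddCircle.norm_le_half_period (1 : ℝ) one_ne_zero)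

lemma bddAbove_range_iInf_norm_coe_mul (v : ι → ℝ) :
    BddAbove (Set.range fun t : ℝ => ⨅ i, ‖((t * v i : ℝ) : UnitAddCircle)‖) :=
  ⟨1 / 2, Set.forall_mem_range.2 (iInf_norm_coe_mul_le_one_half v)⟩

lemma maxLoneliness_eq_of_forall_le_of_forall_exists_le {v : ι → ℝ} {ρ t₀ : ℝ}
    (lower : ∀ i, ρ ≤ ‖((t₀ * v i : ℝ) : UnitAddCircle)‖)
    (upper : ∀ t : ℝ, ∃ i, ‖((t * v i : ℝ) : UnitAddCircle)‖ ≤ ρ) : maxLoneliness v = ρ := by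
  apply le_antisymm
  · refine ciSup_le fun t => ?_
    obtain ⟨i, hi⟩ := upper t
    exact ciInf_le_of_le (Set.finite_range _).bddBelow i hi
  · exact le_ciSup_of_le (bddAbove_range_iInf_norm_coe_mul v) t₀ (le_ciInf lower)

end maxLoneliness

/-! ### Lines -/

/-- The subtorus `⟨v⟩_ℝ` spanned by a single integer vector; for `v ≠ 0` these are the
1-dimensional subtori. -/
def lineTorus {n : ℕ} (v : Fin n → ℤ) : Set (Torus n) := spanTorus fun _ : Fin 1 => v

section lineTorus

variable {n : ℕ} {v : Fin n → ℤ}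

lemma lineTorus_eq_range (v : Fin n → ℤ) :
    lineTorus v = Set.range fun t : ℝ => torusProj fun i => t * v i := by
  ext p
  constructor
  · rintro ⟨t, rfl⟩
    exact ⟨t 0, by simp⟩
  · rintro ⟨t, rfl⟩
    exact ⟨fun _ => t, by simp⟩

lemma isSubtorus_one_iff {T : Set (Torus n)} : IsSubtorus 1 T ↔ ∃ v ≠ 0, T = lineTorus v := by
  have linearIndependent_iff (v : Fin 1 → Fin n → ℤ) :
      LinearIndependent ℝ (fun (j : Fin 1) (i : Fin n) => (v j i : ℝ)) ↔ v 0 ≠ 0 := by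
    simp [funext_iff]
  simp only [IsSubtorus, linearIndependent_iff]
  constructor
  · rintro ⟨v, hv, rfl⟩
    exact ⟨v 0, hv, congrArg spanTorus (funext fun j => by rw [Subsingleton.elim j 0])⟩
  · rintro ⟨v, hv, rfl⟩
    exact ⟨fun _ => v, hv, rfl⟩

lemma isProperSub_lineTorus_iff : IsProperSub (lineTorus v) ↔ ∀ i, v i ≠ 0 := by
  rw [IsProperSub, lineTorus_eq_range, Set.range_subset_iff]
  constructor
  · intro h i hi
    exact h fun t => Set.mem_iUnion.2 ⟨i, by simp [torusProj, hi]⟩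
  · intro hv h
    obtain ⟨i, hi⟩ := Set.mem_iUnion.1 (h √2)
    exact coe_sqrt_two_mul_intCast_ne_zero (hv i) hi

lemma dVal_lineTorus [NeZero n] (v : Fin n → ℤ) :
    DVal (lineTorus v) = 1 / 2 - maxLoneliness fun i => (v i : ℝ) := by
  have antitone : Antitone fun x : ℝ => 1 / 2 - x := fun _ _ h => sub_le_sub_left h _
  have cont {x : ℝ} : ContinuousAt (fun x : ℝ => 1 / 2 - x) x := by fun_prop
  rw [DVal, lineTorus_eq_range, ← Set.range_comp, maxLoneliness,
    antitone.map_ciSup_of_continuousAt cont (bddAbove_range_iInf_norm_coe_mul _), sInf_range]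
  refine iInf_congr fun t => ?_
  rw [antitone.map_ciInf_of_continuousAt cont (Set.finite_range _).bddBelow]
  exact iSup_congr fun i => dist_coe_one_half _

end lineTorus

/-! ### The torus `⟨(0, 1, …, n), (1, 0, …, 0)⟩` -/

/-- The subtorus `⟨(0, 1, …, n), (1, 0, …, 0)⟩_ℝ`, which for `n = 3` is `U¹`. -/
def arithTorus (n : ℕ) : Set (Torus (n + 1)) :=
  spanTorus ![fun i => (i : ℤ), Pi.single 0 1]

/-- The speeds `(x, 1, 2, …, n)`, to which those of a proper line in `arithTorus n` are
proportional; the real number `x` replaces an integer at the cost of rescaling time. -/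
def arithSpeeds (n : ℕ) (x : ℝ) : Fin (n + 1) → ℝ := Fin.cons x fun i => i + 1

section arithTorus

variable {n : ℕ}

lemma U1_eq_arithTorus : U1 = arithTorus 3 :=
  congrArg spanTorus (by decide)

lemma lineTorus_subset_arithTorus_iff (hn : 0 < n) {v : Fin (n + 1) → ℤ} :
    lineTorus v ⊆ arithTorus n ↔ ∃ b : ℤ, ∀ i : Fin n, v i.succ = (i + 1) * b := by
  rw [lineTorus_eq_range, Set.range_subset_iff]
  constructor
  · intro h
    refine ⟨v (Fin.succ ⟨0, hn⟩), fun i => ?_⟩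
    rw [← sub_eq_zero, ← Int.cast_eq_zero (α := ℝ)]
    refine eq_zero_of_forall_coe_mul_eq_zero fun t => ?_
    obtain ⟨s, hs⟩ := h t
    have coord (i : Fin n) :
        ((t * v i.succ : ℝ) : UnitAddCircle) = (i + 1 : ℕ) • ((s 0 : ℝ) : UnitAddCircle) := by
      rw [← AddCircle.coe_nsmul]
      simpa [torusProj, mul_comm] using congrFun hs i.succ
    have hcoord := coord i
    have h1 := coord ⟨0, hn⟩
    simp only [zero_add, one_smul] at h1
    rw [← h1, ← AddCircle.coe_nsmul, ← sub_eq_zero, ← AddCircle.coe_sub] at hcoord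
    rw [← hcoord]
    congr 1
    rw [nsmul_eq_mul]
    push_cast
    ring
  · rintro ⟨b, hb⟩ t
    refine ⟨![t * b, t * v 0], congrArg torusProj (funext fun i => ?_)⟩
    refine Fin.cases ?_ (fun i => ?_) i
    · simp
    · simp [hb, mul_assoc, mul_comm (b : ℝ)]

lemma maxLoneliness_intCast_eq {v : Fin (n + 1) → ℤ} {b : ℤ} (hb : b ≠ 0)
    (hv : ∀ i : Fin n, v i.succ = (i + 1) * b) :
    maxLoneliness (fun i => (v i : ℝ)) = maxLoneliness (arithSpeeds n (v 0 / b)) := by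
  have hb' : (b : ℝ) ≠ 0 := mod_cast hb
  rw [← maxLoneliness_smul hb' (arithSpeeds n _)]
  congr 1
  ext i
  refine Fin.cases ?_ (fun i => ?_) i
  · simp [arithSpeeds, mul_div_cancel₀ _ hb']
  · simp [arithSpeeds, hv, mul_comm]

lemma relSpec1_arithTorus (hn : 0 < n) :
    relSpec1 (arithTorus n) =
      (fun x : ℚ => 1 / 2 - maxLoneliness (arithSpeeds n x)) '' {0}ᶜ := by
  ext d
  constructor
  · rintro ⟨T, hT, hproper, hsub, rfl⟩
    obtain ⟨v, -, rfl⟩ := isSubtorus_one_iff.1 hT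
    obtain ⟨b, hv⟩ := (lineTorus_subset_arithTorus_iff hn).1 hsub
    have hv0 := isProperSub_lineTorus_iff.1 hproper
    have hb : b ≠ 0 := by
      rintro rfl
      exact hv0 (Fin.succ ⟨0, hn⟩) (by rw [hv, mul_zero])
    refine ⟨v 0 / b, by simp [hv0, hb], ?_⟩
    simp only [Rat.cast_div, Rat.cast_intCast]
    rw [dVal_lineTorus, maxLoneliness_intCast_eq hb hv]
  · rintro ⟨x, hx, rfl⟩
    have hden : (x.den : ℤ) ≠ 0 := mod_cast x.den_ne_zero
    let v : Fin (n + 1) → ℤ := Fin.cons x.num fun i => (i + 1) * x.den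
    have hv : ∀ i : Fin n, v i.succ = (i + 1) * x.den := fun i => rfl
    have hv0 : ∀ i, v i ≠ 0 := by
      refine Fin.cases (by simpa [v] using hx) fun i => ?_
      rw [hv]
      exact mul_ne_zero (by positivity) hden
    refine ⟨lineTorus v, isSubtorus_one_iff.2 ⟨v, fun h => hv0 0 (congrFun h 0), rfl⟩,
      isProperSub_lineTorus_iff.2 hv0, (lineTorus_subset_arithTorus_iff hn).2 ⟨_, hv⟩, ?_⟩
    rw [dVal_lineTorus, maxLoneliness_intCast_eq hden hv]
    simp [v, ← Rat.cast_def]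

lemma maxLoneliness_arithSpeeds_eq {x ρ t₀ : ℝ}
    (lower_head : ρ ≤ ‖((t₀ * x : ℝ) : UnitAddCircle)‖)
    (lower_tail : ∀ j ∈ Set.Icc 1 n, ρ ≤ ‖j • (t₀ : UnitAddCircle)‖)
    (upper : ∀ t : ℝ, ‖((t * x : ℝ) : UnitAddCircle)‖ ≤ ρ ∨
      ∃ j ∈ Set.Icc 1 n, ‖j • (t : UnitAddCircle)‖ ≤ ρ) :
    maxLoneliness (arithSpeeds n x) = ρ := by
  have tail (t : ℝ) (i : Fin n) :
      ((t * arithSpeeds n x i.succ : ℝ) : UnitAddCircle) = (i + 1 : ℕ) • (t : UnitAddCircle) := by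
    simp [← AddCircle.coe_nsmul, arithSpeeds, mul_comm]
  refine maxLoneliness_eq_of_forall_le_of_forall_exists_le (t₀ := t₀) ?_ fun t => ?_
  · refine Fin.cases lower_head fun i => ?_
    rw [tail]
    exact lower_tail _ ⟨by omega, by omega⟩
  · rcases upper t with h | ⟨j, ⟨hj1, hjn⟩, h⟩
    · exact ⟨0, h⟩
    · refine ⟨Fin.succ ⟨j - 1, by omega⟩, ?_⟩
      rw [tail, Nat.sub_add_cancel hj1]
      exact h

lemma maxLoneliness_arithSpeeds_abs (x : ℝ) :
    maxLoneliness (arithSpeeds n |x|) = maxLoneliness (arithSpeeds n x) :=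
  maxLoneliness_congr_abs <| Fin.cases (abs_abs x) fun _ => rfl

lemma exists_int_one_div_le_norm_mul_add (hn : 3 ≤ n) {x : ℚ} (hx : ∀ m : ℤ, x ≠ (n + 1) * m) :
    ∃ k : ℤ, 1 / ((n : ℝ) + 1) ≤ ‖((x * (1 / (n + 1) + k) : ℝ) : UnitAddCircle)‖ := by
  by_cases hden : x.den = 1
  · have hnum : (x.num : ℚ) = x := (Rat.den_eq_one_iff x).1 hden
    refine ⟨0, ?_⟩
    have hdvd : ¬((n + 1 : ℕ) : ℤ) ∣ x.num := fun ⟨m, hm⟩ =>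
      hx m (by rw [← hnum, hm]; push_cast; rfl)
    have := one_div_le_norm_coe_intCast_div n.succ_ne_zero hdvd
    rw [← hnum]
    simpa [div_eq_mul_inv] using this
  · obtain ⟨k, hk⟩ := exists_int_one_half_sub_le_norm_mul_add x (1 / (n + 1))
    have hn' : (3 : ℝ) ≤ n := mod_cast hn
    have hden' : (2 : ℝ) ≤ x.den := by
      have := x.den_pos
      exact_mod_cast (by omega : 2 ≤ x.den)
    refine ⟨k, le_trans ?_ hk⟩
    calc 1 / ((n : ℝ) + 1) ≤ 1 / (3 + 1) := by gcongr
      _ = 1 / 2 - 1 / (2 * 2) := by norm_num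
      _ ≤ 1 / 2 - 1 / (2 * x.den) := by gcongr

lemma maxLoneliness_arithSpeeds_of_ne_mul (hn : 3 ≤ n) {x : ℚ} (hx : ∀ m : ℤ, x ≠ (n + 1) * m) :
    maxLoneliness (arithSpeeds n x) = 1 / (n + 1) := by
  obtain ⟨k, hk⟩ := exists_int_one_div_le_norm_mul_add hn hx
  rw [mul_comm] at hk
  refine maxLoneliness_arithSpeeds_eq hk ?_ fun t => .inr ?_
  · rintro j ⟨hj1, hjn⟩
    have hdvd : ¬((n + 1 : ℕ) : ℤ) ∣ (j : ℤ) := by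
      rw [Int.natCast_dvd_natCast]
      exact Nat.not_dvd_of_pos_of_lt hj1 (Nat.lt_succ_of_le hjn)
    have hk0 : ((k : ℝ) : UnitAddCircle) = 0 := (AddCircle.coe_eq_zero_iff 1).2 ⟨k, by simp⟩
    rw [AddCircle.coe_add, hk0, add_zero, ← AddCircle.coe_nsmul, nsmul_eq_mul, mul_one_div]
    simpa using one_div_le_norm_coe_intCast_div n.succ_ne_zero hdvd
  · simpa using AddCircle.exists_norm_nsmul_le (t : UnitAddCircle) (by omega : 0 < n)

lemma maxLoneliness_arithSpeeds_mul (hn : 0 < n) {m : ℕ} (hm : 0 < m) :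
    maxLoneliness (arithSpeeds n ((n + 1) * m)) = m / ((n + 1) * m + 1) := by
  set ρ : ℝ := m / ((n + 1) * m + 1) with hρ
  have hρ_nonneg : 0 ≤ ρ := by positivity
  have hρ_mul : (n + 1) * m * ρ = m - ρ := by
    rw [hρ]
    field_simp
    ring
  have hρ_le : (n + 1) * ρ ≤ 1 := by
    rw [hρ, ← mul_div_assoc, div_le_one (by positivity)]
    linarith
  refine maxLoneliness_arithSpeeds_eq (t₀ := ρ) ?_ ?_ fun t => ?_
  · have residue : ρ * ((n + 1) * m) - (m - 1 : ℤ) - 1 / 2 = 1 / 2 - ρ := by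
      push_cast
      linear_combination hρ_mul
    have two_mul_le : 2 * ρ ≤ (n + 1) * ρ :=
      mul_le_mul_of_nonneg_right (by exact_mod_cast Nat.succ_le_succ hn) hρ_nonneg
    refine le_trans (le_of_eq ?_) (one_half_sub_abs_le_norm_coe _ (m - 1))
    rw [residue, abs_of_nonneg (by linarith), sub_sub_cancel]
  · rintro j ⟨hj1, hjn⟩
    have lower : 1 * ρ ≤ j * ρ := mul_le_mul_of_nonneg_right (mod_cast hj1) hρ_nonneg
    have upper : j * ρ ≤ n * ρ := mul_le_mul_of_nonneg_right (mod_cast hjn) hρ_nonneg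
    rw [← AddCircle.coe_nsmul, nsmul_eq_mul]
    refine le_trans (le_sub_comm.1 (abs_le.2 ⟨?_, ?_⟩)) (one_half_sub_abs_le_norm_coe _ 0) <;>
      push_cast <;> linarith
  · have hnsmul :
        ((t * ((n + 1) * m) : ℝ) : UnitAddCircle) = m • (n + 1) • (t : UnitAddCircle) := by
      rw [← AddCircle.coe_nsmul, ← AddCircle.coe_nsmul, nsmul_eq_mul, nsmul_eq_mul]
      congr 1
      push_cast
      ring
    rw [hnsmul]
    exact (exists_norm_nsmul_le_or_norm_nsmul_succ_nsmul_le t hn hm).symm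

lemma maxLoneliness_arithSpeeds_mul_natAbs (m : ℤ) :
    maxLoneliness (arithSpeeds n ((n + 1) * m.natAbs)) =
      maxLoneliness (arithSpeeds n ((n + 1) * m)) := by
  have abs_mul_intCast : |((n : ℝ) + 1) * m| = (n + 1) * m.natAbs := by
    rw [abs_mul, abs_of_pos (Nat.cast_add_one_pos n), Nat.cast_natAbs, Int.cast_abs]
  rw [← abs_mul_intCast, maxLoneliness_arithSpeeds_abs]

lemma one_half_sub_maxLoneliness_arithSpeeds_mul_succ (hn : 0 < n) (s : ℕ) :
    1 / 2 - maxLoneliness (arithSpeeds n ((n + 1) * (s + 1 : ℕ))) =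
      1 / 2 - 1 / (n + 1) + 1 / ((n + 1) * ((n + 1) * s + (n + 2))) := by
  rw [maxLoneliness_arithSpeeds_mul hn s.succ_pos]
  push_cast
  field_simp
  ring

end arithTorus

theorem stmt15_general {n : ℕ} (hn : 3 ≤ n) :
    relSpec1 (arithTorus n) = insert (1 / 2 - 1 / (n + 1) : ℝ)
      {x : ℝ | ∃ s : ℕ, x = 1 / 2 - 1 / (n + 1) + 1 / ((n + 1) * ((n + 1) * s + (n + 2)))} := by
  have hn0 : 0 < n := by omega
  rw [relSpec1_arithTorus hn0]
  apply Set.Subset.antisymm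
  · rintro _ ⟨x, hx0, rfl⟩
    by_cases hx : ∃ m : ℤ, x = (n + 1) * m
    · obtain ⟨m, rfl⟩ := hx
      have hm : m ≠ 0 := by
        rintro rfl
        simp at hx0
      obtain ⟨s, hs⟩ := Nat.exists_eq_add_one_of_ne_zero (Int.natAbs_ne_zero.2 hm)
      refine .inr ⟨s, ?_⟩
      rw [← one_half_sub_maxLoneliness_arithSpeeds_mul_succ hn0, ← hs,
        maxLoneliness_arithSpeeds_mul_natAbs]
      push_cast
      rfl
    · push Not at hx
      exact .inl (congrArg _ (maxLoneliness_arithSpeeds_of_ne_mul hn hx))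
  · rintro _ (rfl | ⟨s, rfl⟩)
    · have one_ne_mul (m : ℤ) : (1 : ℚ) ≠ (n + 1) * m := fun h => by
        have h' : (1 : ℤ) = (n + 1) * m := mod_cast h
        have := Int.le_of_dvd one_pos ⟨m, h'⟩
        omega
      exact ⟨1, one_ne_zero, congrArg _ (maxLoneliness_arithSpeeds_of_ne_mul hn one_ne_mul)⟩
    · refine ⟨(n + 1) * (s + 1 : ℕ), mul_ne_zero (by positivity) (by positivity), ?_⟩
      rw [← one_half_sub_maxLoneliness_arithSpeeds_mul_succ hn0]
      push_cast
      rfl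

lemma relSpec1_U1 :
    relSpec1 U1 = insert (1 / 4) {x : ℝ | ∃ s : ℕ, x = 1/4 + 1/(4 * (4 * (s : ℝ) + 5))} := by
  rw [U1_eq_arithTorus, stmt15_general le_rfl]
  norm_num

/-- `𝒮₁(U¹)` has finite symmetric difference with `1/4 + 1/4Prog(4,5)`. -/
theorem stmt15 :
    (symmDiff (relSpec1 U1)
      {x : ℝ | ∃ s : ℕ, x = 1/4 + 1/(4 * (4 * (s : ℝ) + 5))}).Finite := by
  rw [relSpec1_U1, symmDiff_of_ge (Set.subset_insert _ _)]
  exact (Set.finite_singleton _).subset (Set.sdiff_subset_iff.2 Set.union_singleton.ge)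
end
end
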